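/- arXiv:1503.06390 — 3 statements merged into one kernel-verified Lean document; each statement's English description precedes it below -/
import Mathlib

section
/- Let A be a unital C*-algebra, B ⊆ A a unital C*-subalgebra, X a selfadjoint element of A, a₀ a selfadjoint element of B, and η : A → B a continuous completely positive linear map. Let H⁺(B) = {b ∈ B : Im b is strictly positive} and suppose ω : H⁺(B) → H⁺(B) satisfies the subordination equation ω(b) = b + a₀ + η((X − ω(b))⁻¹) for all b ∈ H⁺(B). Then for every strictly positive q ∈ B the map u ↦ Re ω(u + iq) is a bijection from the set of selfadjoint elements of B onto itself. -/
noncomputable section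

open Filter Topology
open scoped ComplexOrder

/-- The real part `(b + b*)/2` of an element of a complex star algebra. -/
def reP {A : Type*} [NonUnitalRing A] [StarRing A] [Module ℂ A] (b : A) : A :=
  (2 : ℂ)⁻¹ • (b + star b)

/-- The imaginary part `(b - b*)/(2i)` of an element of a complex star algebra. -/
def imP {A : Type*} [NonUnitalRing A] [StarRing A] [Module ℂ A] (b : A) : A :=
  (2 * Complex.I)⁻¹ • (b - star b)

/-- An element of a C*-algebra is strictly positive if it is selfadjoint, positive
(with respect to the canonical order coming from the star-ordered ring structure)
and invertible. -/
def SPos {A : Type*} [Ring A] [StarRing A] [PartialOrder A] (v : A) : Prop :=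
  IsSelfAdjoint v ∧ 0 ≤ v ∧ IsUnit v

set_option linter.unusedSectionVars false

section helpers

variable {A : Type*} [CStarAlgebra A] [PartialOrder A] [StarOrderedRing A]

lemma SPos.isp {v : A} (h : SPos v) : IsStrictlyPositive v :=
  IsStrictlyPositive.iff_of_unital.mpr ⟨h.2.1, h.2.2⟩

lemma SPos.of_isp {v : A} (h : IsStrictlyPositive v) : SPos v :=
  ⟨IsSelfAdjoint.of_nonneg h.nonneg, h.nonneg, h.isUnit⟩

lemma re_add_im (w : A) : reP w + Complex.I • imP w = w := by
  have h : Complex.I * (2 * Complex.I)⁻¹ = 2⁻¹ := by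
    field_simp
  rw [reP, imP, smul_smul, h, ← smul_add]
  have : w + star w + (w - star w) = (2 : ℂ) • w := by rw [two_smul]; abel
  rw [this, smul_smul]; norm_num

lemma reP_sa (w : A) : IsSelfAdjoint (reP w) := by
  rw [IsSelfAdjoint, reP, star_smul, star_add, star_star, add_comm]
  simp

lemma imP_sa (w : A) : IsSelfAdjoint (imP w) := by
  rw [IsSelfAdjoint, imP, star_smul, star_sub, star_star]
  have : star (2 * Complex.I)⁻¹ = - (2 * Complex.I)⁻¹ := by
    simp
  rw [this, neg_smul, ← smul_neg, neg_sub]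

lemma star_cart {s v : A} (hs : IsSelfAdjoint s) (hv : IsSelfAdjoint v) :
    star (s + Complex.I • v) = s - Complex.I • v := by
  rw [star_add, star_smul, hs.star_eq, hv.star_eq]; simp [sub_eq_add_neg]

lemma reP_cart {s v : A} (hs : IsSelfAdjoint s) (hv : IsSelfAdjoint v) :
    reP (s + Complex.I • v) = s := by
  rw [reP, star_cart hs hv]
  have : s + Complex.I • v + (s - Complex.I • v) = (2 : ℂ) • s := by rw [two_smul]; abel
  rw [this, smul_smul]; norm_num

lemma imP_cart {s v : A} (hs : IsSelfAdjoint s) (hv : IsSelfAdjoint v) :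
    imP (s + Complex.I • v) = v := by
  rw [imP, star_cart hs hv]
  have : s + Complex.I • v - (s - Complex.I • v) = (2 * Complex.I) • v := by
    rw [mul_smul, two_smul]; abel
  rw [this, smul_smul, inv_mul_cancel₀ (by simp), one_smul]

lemma imP_add (a b : A) : imP (a + b) = imP a + imP b := by
  simp only [imP, star_add, ← smul_add]; congr 1; abel

lemma imP_of_sa {a : A} (h : IsSelfAdjoint a) : imP a = 0 := by
  simp [imP, h.star_eq]

lemma isp_inv {v : A} (hv : IsStrictlyPositive v) : IsStrictlyPositive (Ring.inverse v) := by
  have hu := hv.isUnit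
  have hs : star (Ring.inverse v) = Ring.inverse v := by
    rw [← Ring.inverse_star, (IsSelfAdjoint.of_nonneg hv.nonneg).star_eq]
  refine IsStrictlyPositive.iff_of_unital.mpr ⟨?_, hu.ringInverse⟩
  have := star_left_conjugate_nonneg hv.nonneg (Ring.inverse v)
  rwa [hs, Ring.inverse_mul_cancel _ hu, one_mul] at this

/-- `v + y v⁻¹ y` -/
def Wop (y v : A) : A := v + y * Ring.inverse v * y

lemma Wop_isp {y v : A} (hy : IsSelfAdjoint y) (hv : IsStrictlyPositive v) :
    IsStrictlyPositive (Wop y v) := by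
  refine hv.add_nonneg ?_
  exact hy.conjugate_nonneg (isp_inv hv).nonneg

lemma fact1 {y v : A} (hv : IsUnit v) :
    (y - Complex.I • v) * Ring.inverse v * (y + Complex.I • v) = Wop y v := by
  have h1 := Ring.inverse_mul_cancel v hv
  have h2 := Ring.mul_inverse_cancel v hv
  have h3 : (y - Complex.I • v) * Ring.inverse v = y * Ring.inverse v - Complex.I • 1 := by
    rw [sub_mul, smul_mul_assoc, h2]
  rw [h3, sub_mul, mul_add, mul_smul_comm, mul_assoc y (Ring.inverse v) v, h1, smul_mul_assoc,
    one_mul, smul_add, smul_smul, Complex.I_mul_I, mul_one, Wop]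
  simp
  abel

lemma fact2 {y v : A} (hv : IsUnit v) :
    (y + Complex.I • v) * Ring.inverse v * (y - Complex.I • v) = Wop y v := by
  have h1 := Ring.inverse_mul_cancel v hv
  have h2 := Ring.mul_inverse_cancel v hv
  have h3 : (y + Complex.I • v) * Ring.inverse v = y * Ring.inverse v + Complex.I • 1 := by
    rw [add_mul, smul_mul_assoc, h2]
  rw [h3, add_mul, mul_sub, mul_smul_comm, mul_assoc y (Ring.inverse v) v, h1, smul_mul_assoc,
    one_mul, smul_sub, smul_smul, Complex.I_mul_I, mul_one, Wop]
  simp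
  abel

lemma unit_res {y v : A} (hy : IsSelfAdjoint y) (hv : IsStrictlyPositive v) :
    IsUnit (y - Complex.I • v) := by
  have hW := (Wop_isp hy hv).isUnit
  rw [isUnit_iff_exists_and_exists]
  refine ⟨⟨Ring.inverse v * (y + Complex.I • v) * Ring.inverse (Wop y v), ?_⟩,
    ⟨Ring.inverse (Wop y v) * ((y + Complex.I • v) * Ring.inverse v), ?_⟩⟩
  · rw [← mul_assoc, ← mul_assoc, fact1 hv.isUnit, Ring.mul_inverse_cancel _ hW]
  · rw [mul_assoc, fact2 hv.isUnit, Ring.inverse_mul_cancel _ hW]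

lemma star_res {y v : A} (hy : IsSelfAdjoint y) (hv : IsStrictlyPositive v) :
    star (Ring.inverse (y - Complex.I • v)) = Ring.inverse (y + Complex.I • v) := by
  rw [← Ring.inverse_star, ← star_cart hy (IsSelfAdjoint.of_nonneg hv.nonneg), star_star]

lemma unit_res' {y v : A} (hy : IsSelfAdjoint y) (hv : IsStrictlyPositive v) :
    IsUnit (y + Complex.I • v) := by
  have := (unit_res hy hv).star
  rwa [← star_cart hy (IsSelfAdjoint.of_nonneg hv.nonneg), star_star] at this

lemma two_I_smul (y v : A) : (y + Complex.I • v) - (y - Complex.I • v) = (2 * Complex.I) • v := by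
  rw [mul_smul, two_smul]; abel

lemma im_res1 {y v : A} (hy : IsSelfAdjoint y) (hv : IsStrictlyPositive v) :
    imP (Ring.inverse (y - Complex.I • v)) =
      Ring.inverse (y - Complex.I • v) * v * star (Ring.inverse (y - Complex.I • v)) := by
  rw [imP, star_res hy hv, Ring.inverse_sub_inverse (iff_of_true (unit_res hy hv) (unit_res' hy hv)),
    two_I_smul, mul_smul_comm, smul_mul_assoc, smul_smul, inv_mul_cancel₀ (by simp), one_smul]

lemma im_res2 {y v : A} (hy : IsSelfAdjoint y) (hv : IsStrictlyPositive v) :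
    imP (Ring.inverse (y - Complex.I • v)) =
      star (Ring.inverse (y - Complex.I • v)) * v * Ring.inverse (y - Complex.I • v) := by
  rw [imP, star_res hy hv, ← neg_sub (Ring.inverse (y + Complex.I • v)),
    Ring.inverse_sub_inverse (iff_of_true (unit_res' hy hv) (unit_res hy hv)),
    ← neg_sub (y + Complex.I • v),
    two_I_smul, mul_neg, neg_mul, neg_neg, mul_smul_comm, smul_mul_assoc, smul_smul,
    inv_mul_cancel₀ (by simp), one_smul]

lemma im_res3 {y v : A} (hy : IsSelfAdjoint y) (hv : IsStrictlyPositive v) :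
    imP (Ring.inverse (y - Complex.I • v)) = Ring.inverse (Wop y v) := by
  rw [im_res1 hy hv, star_res hy hv, ← fact2 hv.isUnit,
    Ring.inverse_mul (Or.inr (unit_res hy hv)), Ring.inverse_mul (Or.inr hv.isUnit.ringInverse),
    Ring.inverse_inverse hv.isUnit, mul_assoc]

lemma isp_smul {v : A} (hv : IsStrictlyPositive v) {t : ℝ} (ht : 0 < t) :
    IsStrictlyPositive (t • v) := by
  refine IsStrictlyPositive.iff_of_unital.mpr ⟨smul_nonneg ht.le hv.nonneg, ?_⟩
  have := hv.isUnit.smul (Units.mk0 t ht.ne')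
  simpa using this

lemma inv_smul' {v : A} (hv : IsUnit v) {t : ℝ} (ht : 0 < t) :
    Ring.inverse (t • v) = t⁻¹ • Ring.inverse v := by
  have hu : IsUnit (t • v) := by simpa using hv.smul (Units.mk0 t ht.ne')
  have := (Ring.inverse_mul_eq_iff_eq_mul (t • v) 1 (t⁻¹ • Ring.inverse v) hu).mpr (by
    rw [smul_mul_smul_comm, Ring.mul_inverse_cancel _ hv, mul_inv_cancel₀ ht.ne', one_smul])
  rwa [mul_one] at this

lemma inv_thompson {v w : A} (hv : IsStrictlyPositive v) (hw : IsStrictlyPositive w) {t : ℝ}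
    (ht : 0 < t) (h : v ≤ t • w) : Ring.inverse w ≤ t • Ring.inverse v := by
  have := CStarAlgebra.ringInverse_le_ringInverse h hv
  rw [inv_smul' hw.isUnit ht] at this
  have h2 := smul_le_smul_of_nonneg_left this ht.le
  rwa [smul_smul, mul_inv_cancel₀ ht.ne', one_smul] at h2

lemma Wop_thompson {y v w : A} (hy : IsSelfAdjoint y)
    (hv : IsStrictlyPositive v) (hw : IsStrictlyPositive w) {t : ℝ}
    (ht : 0 < t) (h1 : v ≤ t • w) (h2 : w ≤ t • v) :
    Ring.inverse (Wop y v) ≤ t • Ring.inverse (Wop y w) := by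
  refine inv_thompson (Wop_isp hy hw) (Wop_isp hy hv) ht ?_
  rw [Wop, Wop, smul_add]
  refine add_le_add h2 ?_
  have := hy.conjugate_le_conjugate (inv_thompson hv hw ht h1)
  rwa [mul_smul_comm, smul_mul_assoc] at this

lemma Wop_inv_le {y v : A} (hy : IsSelfAdjoint y) (hv : IsStrictlyPositive v) :
    Ring.inverse (Wop y v) ≤ Ring.inverse v := by
  refine CStarAlgebra.ringInverse_le_ringInverse ?_ hv
  exact le_add_of_nonneg_right (hy.conjugate_nonneg (isp_inv hv).nonneg)

lemma inv_cont {v : A} (hv : IsUnit v) : ContinuousAt Ring.inverse v := by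
  obtain ⟨u, rfl⟩ := hv
  exact NormedRing.inverse_continuousAt u

lemma Wop_cont {y v : A} (hy : IsSelfAdjoint y) (hv : IsStrictlyPositive v) :
    ContinuousAt (fun v => Ring.inverse (Wop y v)) v := by
  have h : ContinuousAt (fun v => Wop y v) v := by
    unfold Wop
    have := inv_cont hv.isUnit
    fun_prop
  exact ContinuousAt.comp (g := Ring.inverse) (inv_cont (Wop_isp hy hv).isUnit) h

lemma dom {q : A} (hq : IsStrictlyPositive q) {M : A} (hM : 0 ≤ M) :
    ∃ c : ℝ, 0 < c ∧ c < 1 ∧ c • M ≤ q := by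
  have hqs := IsSelfAdjoint.of_nonneg hq.nonneg
  obtain ⟨r, hr, h⟩ : ∃ r : ℝ, 0 < r ∧ algebraMap ℝ A r ≤ q := by
    rcases subsingleton_or_nontrivial A with hs | hs
    · exact ⟨1, one_pos, le_of_eq (Subsingleton.elim _ _)⟩
    · rw [CFC.exists_pos_algebraMap_le_iff hqs]
      intro x hx
      exact hq.spectrum_pos hx
  have hM2 := (IsSelfAdjoint.of_nonneg hM).le_algebraMap_norm_self
  have hn := norm_nonneg M
  refine ⟨r / (r + ‖M‖ + 1), by positivity, ?_, ?_⟩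
  · rw [div_lt_one (by positivity)]; linarith
  · have h1 := smul_le_smul_of_nonneg_left hM2
      (show 0 ≤ r / (r + ‖M‖ + 1) by positivity)
    refine h1.trans (le_trans ?_ h)
    rw [Algebra.algebraMap_eq_smul_one, Algebra.algebraMap_eq_smul_one, smul_smul]
    refine smul_le_smul_of_nonneg_right ?_ zero_le_one
    rw [div_mul_eq_mul_div, div_le_iff₀ (by positivity)]
    nlinarith

lemma contr {q k k' : A} {c t : ℝ} (ht : 1 ≤ t) (hk : k ≤ t • k') (hc : c • (q + k') ≤ q) :
    q + k ≤ (1 + (1 - c) * (t - 1)) • (q + k') := by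
  have h1 := sub_nonneg.mpr hk
  have h2 := smul_nonneg (sub_nonneg.mpr ht) (sub_nonneg.mpr hc)
  rw [← sub_nonneg]
  have : (1 + (1 - c) * (t - 1)) • (q + k') - (q + k) =
      (t • k' - k) + (t - 1) • (q - c • (q + k')) := by
    module
  rw [this]
  exact add_nonneg h1 h2

lemma dom' {q : A} (hq : IsStrictlyPositive q) {M : A} (hM : 0 ≤ M) :
    ∃ τ : ℝ, 0 ≤ τ ∧ M ≤ (1 + τ) • q := by
  obtain ⟨c, h0, h1, h⟩ := dom hq hM
  refine ⟨c⁻¹ - 1, ?_, ?_⟩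
  · rw [sub_nonneg]; exact (one_le_inv₀ h0).mpr h1.le
  · have := smul_le_smul_of_nonneg_left h (inv_nonneg.mpr h0.le)
    rw [smul_smul, inv_mul_cancel₀ h0.ne', one_smul] at this
    simpa using this

lemma le_smul_mono {v w : A} (hw : 0 ≤ w) {s t : ℝ} (hst : s ≤ t) (h : v ≤ s • w) : v ≤ t • w :=
  h.trans (smul_le_smul_of_nonneg_right hst hw)

/-- Uniqueness of fixed points of `v ↦ q + K v` by contraction in the Thompson metric. -/
lemma thompson_unique {K : A → A} {q : A} (hq : IsStrictlyPositive q)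
    (hK : ∀ v w : A, IsStrictlyPositive v → IsStrictlyPositive w → ∀ t : ℝ, 0 < t →
      v ≤ t • w → w ≤ t • v → K v ≤ t • K w)
    {v w : A} (hv : IsStrictlyPositive v) (hw : IsStrictlyPositive w)
    (h1 : v = q + K v) (h2 : w = q + K w) : v = w := by
  obtain ⟨c, hc0, hc1, hc⟩ := dom hq (add_nonneg hv.nonneg hw.nonneg)
  have hcv : c • v ≤ q := (smul_le_smul_of_nonneg_left
    (le_add_of_nonneg_right hw.nonneg) hc0.le).trans hc
  have hcw : c • w ≤ q := (smul_le_smul_of_nonneg_left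
    (le_add_of_nonneg_left hv.nonneg) hc0.le).trans hc
  obtain ⟨τ₁, ht1, hτ₁⟩ := dom' hw hv.nonneg
  obtain ⟨τ₂, ht2, hτ₂⟩ := dom' hv hw.nonneg
  have key : ∀ n : ℕ, v ≤ (1 + (1 - c) ^ n * (τ₁ + τ₂)) • w ∧
      w ≤ (1 + (1 - c) ^ n * (τ₁ + τ₂)) • v := by
    intro n
    induction n with
    | zero =>
      exact ⟨le_smul_mono hw.nonneg (by simp [ht2]) hτ₁,
        le_smul_mono hv.nonneg (by simp [ht1]) hτ₂⟩
    | succ n ih =>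
      have hp : 0 ≤ (1 - c) ^ n * (τ₁ + τ₂) :=
        mul_nonneg (pow_nonneg (by linarith) _) (by linarith)
      have e : (1 + (1 - c) ^ (n + 1) * (τ₁ + τ₂)) =
        1 + (1 - c) * ((1 + (1 - c) ^ n * (τ₁ + τ₂)) - 1) := by ring
      have a1 := hK v w hv hw _ (by linarith) ih.1 ih.2
      have a2 := hK w v hw hv _ (by linarith) ih.2 ih.1
      have b1 := contr (by linarith) a1 (by rwa [← h2])
      have b2 := contr (by linarith) a2 (by rwa [← h1])
      rw [← h1, ← h2] at b1 b2
      rw [e]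
      exact ⟨b1, b2⟩
  have lim : ∀ x : A, Tendsto (fun n : ℕ => (1 + (1 - c) ^ n * (τ₁ + τ₂)) • x) atTop (𝓝 x) := by
    intro x
    have h := tendsto_pow_atTop_nhds_zero_of_lt_one (r := 1 - c) (by linarith) (by linarith)
    have := (((h.mul_const (τ₁ + τ₂)).const_add 1).smul_const x)
    simpa using this
  exact le_antisymm (ge_of_tendsto' (lim w) fun n => (key n).1)
    (ge_of_tendsto' (lim v) fun n => (key n).2)

lemma norm_sub_le_of {v w M : A} {ε : ℝ} (hv : 0 ≤ v) (hw : 0 ≤ w) (hvM : v ≤ M) (hwM : w ≤ M)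
    (hε : 0 ≤ ε)
    (h1 : v ≤ (1 + ε) • w) (h2 : w ≤ (1 + ε) • v) : ‖v - w‖ ≤ ε * ‖M‖ := by
  have hM : 0 ≤ M := hv.trans hvM
  have hM2 := (IsSelfAdjoint.of_nonneg hM).le_algebraMap_norm_self
  have hh : ε • M ≤ algebraMap ℝ A (ε * ‖M‖) := by
    have := smul_le_smul_of_nonneg_left hM2 hε
    rwa [Algebra.algebraMap_eq_smul_one, smul_smul, ← Algebra.algebraMap_eq_smul_one] at this
  have e : ∀ x y : A, y ≤ M → x ≤ (1 + ε) • y → x - y ≤ algebraMap ℝ A (ε * ‖M‖) := by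
    intro x y hy hxy
    rw [add_smul, one_smul] at hxy
    exact (sub_le_iff_le_add'.mpr hxy).trans ((smul_le_smul_of_nonneg_left hy hε).trans hh)
  have a1 := e v w hwM h1
  have a2 := e w v hvM h2
  have hsa : IsSelfAdjoint (v - w) := (IsSelfAdjoint.of_nonneg hv).sub (IsSelfAdjoint.of_nonneg hw)
  rcases subsingleton_or_nontrivial A with hs | hs
  · rw [Subsingleton.elim (v - w) 0, norm_zero]; positivity
  rcases CStarAlgebra.norm_or_neg_norm_mem_spectrum hsa with h | h
  · exact (le_algebraMap_iff_spectrum_le hsa).mp a1 _ h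
  · rw [← neg_sub v w] at a2
    refine (le_algebraMap_iff_spectrum_le hsa.neg).mp a2 _ ?_
    rw [← spectrum.neg_eq]
    simpa using h

/-- Existence of fixed points of `v ↦ q + K v`. -/
lemma thompson_exists {K : A → A} {q M : A} (hq : IsStrictlyPositive q)
    (hK0 : ∀ v : A, IsStrictlyPositive v → 0 ≤ K v)
    (hK : ∀ v w : A, IsStrictlyPositive v → IsStrictlyPositive w → ∀ t : ℝ, 0 < t →
      v ≤ t • w → w ≤ t • v → K v ≤ t • K w)
    (hM : ∀ v, q ≤ v → q + K v ≤ M)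
    (hcont : ∀ v : A, IsStrictlyPositive v → ContinuousAt K v) :
    ∃ v : A, IsStrictlyPositive v ∧ v = q + K v := by
  have hsp : ∀ v, q ≤ v → IsStrictlyPositive v := fun v h => hq.of_le h
  have hqM : q ≤ M := (le_add_of_nonneg_right (hK0 q hq)).trans (hM q le_rfl)
  have hM0 : 0 ≤ M := hq.nonneg.trans hqM
  obtain ⟨c, hc0, hc1, hc⟩ := dom hq hM0
  obtain ⟨τ, ht, hτ⟩ := dom' hq hM0
  let x : ℕ → A := fun n => (fun v => q + K v)^[n] q
  have hx1 : ∀ n, x (n + 1) = q + K (x n) := fun n => Function.iterate_succ_apply' _ _ _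
  have hxq : ∀ n, q ≤ x n := by
    intro n
    induction n with
    | zero => exact le_rfl
    | succ n ih => rw [hx1]; exact le_add_of_nonneg_right (hK0 _ (hsp _ ih))
  have hxM : ∀ n, x n ≤ M := by
    intro n
    cases n with
    | zero => exact hqM
    | succ n => rw [hx1]; exact hM _ (hxq n)
  have key : ∀ n : ℕ, x n ≤ (1 + (1 - c) ^ n * τ) • x (n + 1) ∧
      x (n + 1) ≤ (1 + (1 - c) ^ n * τ) • x n := by
    intro n
    induction n with
    | zero =>
      have hsc : (1 + (1 - c) ^ 0 * τ) = 1 + τ := by simp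
      have hs1 : ∀ n, M ≤ (1 + τ) • x n := fun n =>
        hτ.trans (smul_le_smul_of_nonneg_left (hxq n) (by linarith))
      rw [hsc]
      exact ⟨(hxM _).trans (hs1 _), (hxM _).trans (hs1 _)⟩
    | succ n ih =>
      have hp : 0 ≤ (1 - c) ^ n * τ :=
        mul_nonneg (pow_nonneg (by linarith) _) (by linarith)
      have e : (1 + (1 - c) ^ (n + 1) * τ) =
        1 + (1 - c) * ((1 + (1 - c) ^ n * τ) - 1) := by ring
      have a1 := hK _ _ (hsp _ (hxq n)) (hsp _ (hxq (n + 1))) _ (by linarith) ih.1 ih.2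
      have a2 := hK _ _ (hsp _ (hxq (n + 1))) (hsp _ (hxq n)) _ (by linarith) ih.2 ih.1
      have hcc : ∀ n, c • (q + K (x n)) ≤ q := fun n =>
        (smul_le_smul_of_nonneg_left (hM _ (hxq n)) hc0.le).trans hc
      have b1 := contr (by linarith) a1 (hcc _)
      have b2 := contr (by linarith) a2 (hcc _)
      rw [← e, ← hx1, ← hx1] at b1 b2
      exact ⟨b1, b2⟩
  have hcau : CauchySeq x := by
    refine cauchySeq_of_le_geometric (1 - c) (τ * ‖M‖) (by linarith) fun n => ?_
    have hp : 0 ≤ (1 - c) ^ n * τ :=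
      mul_nonneg (pow_nonneg (by linarith) _) (by linarith)
    rw [dist_eq_norm]
    refine (norm_sub_le_of (hq.nonneg.trans (hxq _)) (hq.nonneg.trans (hxq _)) (hxM _) (hxM _) hp
      (key n).1 (key n).2).trans (le_of_eq (by ring))
  obtain ⟨v, hv⟩ := cauchySeq_tendsto_of_complete hcau
  have hqv : q ≤ v := ge_of_tendsto' hv hxq
  refine ⟨v, hsp v hqv, ?_⟩
  have l1 : Tendsto (fun n => x (n + 1)) atTop (𝓝 v) := (tendsto_add_atTop_iff_nat 1).mpr hv
  have l2 : Tendsto (fun n => x (n + 1)) atTop (𝓝 (q + K v)) := by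
    simp only [hx1]
    exact (((hcont v (hsp v hqv)).tendsto.comp hv)).const_add q
  exact tendsto_nhds_unique l1 l2

end helpers

section cp

variable {A B : Type*} [CStarAlgebra A] [PartialOrder A] [StarOrderedRing A]
    [CStarAlgebra B] [PartialOrder B] [StarOrderedRing B]

lemma eta_nonneg (η : A →L[ℂ] B)
    (hηcp : ∀ n : ℕ, ∀ p : Matrix (Fin n) (Fin n) A,
      (∃ y : Matrix (Fin n) (Fin n) A, p = star y * y) →
      ∃ z : Matrix (Fin n) (Fin n) B, p.map ⇑η = star z * z) {a : A} (ha : 0 ≤ a) : 0 ≤ η a := by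
  obtain ⟨x, rfl⟩ := CStarAlgebra.nonneg_iff_eq_star_mul_self.mp ha
  obtain ⟨z, hz⟩ := hηcp 1 (Matrix.of fun _ _ => star x * x) ⟨Matrix.of fun _ _ => x, by
    ext i j; simp [Matrix.mul_apply, Matrix.star_apply]⟩
  have := congrFun (congrFun hz 0) 0
  simp [Matrix.mul_apply, Matrix.star_apply] at this
  rw [this]
  exact star_mul_self_nonneg _

lemma eta_star (η : A →L[ℂ] B) (h : ∀ a : A, 0 ≤ a → 0 ≤ η a) (a : A) :
    η (star a) = star (η a) := by
  obtain ⟨y, hy, -, e⟩ := CStarAlgebra.exists_sum_four_nonneg a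
  have h1 : ∀ i, star (y i) = y i := fun i => (IsSelfAdjoint.of_nonneg (hy i)).star_eq
  have h2 : ∀ i, star (η (y i)) = η (y i) := fun i =>
    (IsSelfAdjoint.of_nonneg (h _ (hy i))).star_eq
  rw [e]
  simp only [star_sum, star_smul, map_sum, map_smul, h1, h2]

lemma eta_imP (η : A →L[ℂ] B) (h : ∀ a : A, 0 ≤ a → 0 ≤ η a) (a : A) :
    η (imP a) = imP (η a) := by
  rw [imP, imP, map_smul, map_sub, eta_star η h]

lemma eta_mono (η : A →L[ℂ] B) (h : ∀ a : A, 0 ≤ a → 0 ≤ η a) {a b : A} (hab : a ≤ b) :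
    η a ≤ η b := by
  have := h _ (sub_nonneg.mpr hab)
  rwa [map_sub, sub_nonneg] at this

lemma eta_rsmul (η : A →L[ℂ] B) (t : ℝ) (a : A) : η (t • a) = t • η a :=
  (η.restrictScalars ℝ).map_smul t a

lemma iota_rsmul (ι : B →⋆ₐ[ℂ] A) (t : ℝ) (a : B) : ι (t • a) = t • ι a := by
  rw [← Complex.coe_smul, ← Complex.coe_smul, map_smul]

lemma iota_isp (ι : B →⋆ₐ[ℂ] A) {v : B} (hv : IsStrictlyPositive v) :
    IsStrictlyPositive (ι v) :=
  IsStrictlyPositive.iff_of_unital.mpr ⟨map_nonneg ι hv.nonneg, hv.isUnit.map ι⟩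

lemma iota_mono (ι : B →⋆ₐ[ℂ] A) {v w : B} (h : v ≤ w) : ι v ≤ ι w :=
  OrderHomClass.mono ι h

lemma iota_sa (ι : B →⋆ₐ[ℂ] A) {v : B} (h : IsSelfAdjoint v) : IsSelfAdjoint (ι v) := by
  rw [IsSelfAdjoint, ← map_star, h.star_eq]

/-- The two by two Cauchy-Schwarz consequence of 2-positivity. -/
lemma two_pos_bound {P d Q v w r₁ r₂ : B} {κ : ℝ} (hκ : 0 ≤ κ)
    (hs1 : IsSelfAdjoint r₁) (hs2 : IsSelfAdjoint r₂) (hv : r₁ * v * r₁ = 1) (hw : r₂ * w * r₂ = 1)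
    (z : Matrix (Fin 2) (Fin 2) B) (hP : P = star (z 0 0) * z 0 0 + star (z 1 0) * z 1 0)
    (hd : d = star (z 0 0) * z 0 1 + star (z 1 0) * z 1 1)
    (hQ : Q = star (z 0 1) * z 0 1 + star (z 1 1) * z 1 1)
    (hPv : P ≤ κ • v) (hQw : Q ≤ κ • w) : ‖r₁ * d * r₂‖ ≤ κ := by
  set e := r₁ * d * r₂ with he
  have hse : star e = r₂ * star d * r₁ := by
    rw [he]; simp only [star_mul, hs1.star_eq, hs2.star_eq, mul_assoc]
  have hdstar : star d = star (z 0 1) * z 0 0 + star (z 1 1) * z 1 0 := by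
    rw [hd]; simp
  have pos : ∀ g h : B, 0 ≤ star g * P * g + star g * d * h + star h * star d * g
      + star h * Q * h := by
    intro g h
    have := add_nonneg (star_mul_self_nonneg (z 0 0 * g + z 0 1 * h))
      (star_mul_self_nonneg (z 1 0 * g + z 1 1 * h))
    refine this.trans (le_of_eq ?_)
    rw [hdstar, hP, hd, hQ]
    simp only [star_add, star_mul]
    noncomm_ring
  have h0 := pos (r₁ * e) (-(κ • r₂))
  have e1 : star (r₁ * e) * P * (r₁ * e) ≤ κ • (star e * e) := by
    refine (star_left_conjugate_le_conjugate hPv (r₁ * e)).trans (le_of_eq ?_)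
    rw [star_mul, hs1.star_eq, mul_smul_comm, smul_mul_assoc]
    congr 1
    calc star e * r₁ * v * (r₁ * e) = star e * (r₁ * v * r₁) * e := by noncomm_ring
      _ = _ := by rw [hv, mul_one]
  have e2 : star (r₁ * e) * d * (-(κ • r₂)) = -(κ • (star e * e)) := by
    rw [star_mul, hs1.star_eq, mul_neg, mul_smul_comm]
    congr 2
    rw [he]; noncomm_ring
  have e3 : star (-(κ • r₂)) * star d * (r₁ * e) = -(κ • (star e * e)) := by
    rw [star_neg, star_smul, hs2.star_eq, neg_mul, neg_mul, smul_mul_assoc, smul_mul_assoc, hse]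
    simp [mul_assoc]
  have e4 : star (-(κ • r₂)) * Q * (-(κ • r₂)) ≤ (κ * κ * κ) • 1 := by
    refine (star_left_conjugate_le_conjugate hQw (-(κ • r₂))).trans (le_of_eq ?_)
    rw [star_neg, star_smul, hs2.star_eq, neg_mul, neg_mul, mul_neg, neg_neg]
    simp only [smul_mul_assoc, mul_smul_comm, smul_smul, hw]
    simp [mul_assoc]
  rw [e2, e3] at h0
  have h1 : κ • (star e * e) ≤ (κ * κ * κ) • 1 := by
    rw [← sub_nonneg]
    refine h0.trans ?_
    calc _ ≤ κ • (star e * e) + -(κ • (star e * e)) + -(κ • (star e * e)) + (κ * κ * κ) • (1 : B) := by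
          gcongr
      _ = _ := by abel
  rcases hκ.eq_or_lt with hk | hk
  · subst hk
    have hP0 : P ≤ 0 := by simpa using hPv
    have hz0 := star_mul_self_nonneg (z 0 0)
    have hz1 := star_mul_self_nonneg (z 1 0)
    have a0 : star (z 0 0) * z 0 0 = 0 :=
      le_antisymm ((le_add_of_nonneg_right hz1).trans (hP ▸ hP0)) hz0
    have a1 : star (z 1 0) * z 1 0 = 0 :=
      le_antisymm ((le_add_of_nonneg_left hz0).trans (hP ▸ hP0)) hz1
    rw [CStarRing.star_mul_self_eq_zero_iff] at a0 a1
    have : d = 0 := by rw [hd, a0, a1]; simp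
    rw [he, this]; simp
  · have h2 : star e * e ≤ algebraMap ℝ B (κ ^ 2) := by
      have := smul_le_smul_of_nonneg_left h1 (inv_nonneg.mpr hk.le)
      rw [smul_smul, smul_smul, inv_mul_cancel₀ hk.ne', one_smul] at this
      rw [Algebra.algebraMap_eq_smul_one]
      convert this using 2
      field_simp
    have h3 := (CStarAlgebra.norm_le_iff_le_algebraMap _ (sq_nonneg κ)
      (star_mul_self_nonneg e)).mpr h2
    rw [CStarRing.norm_star_mul_self, ← sq] at h3
    exact le_of_sq_le_sq h3 hκ

lemma exists_root {v : B} (hv : IsStrictlyPositive v) : ∃ r s : B, IsSelfAdjoint r ∧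
    IsSelfAdjoint s ∧ r * r = v ∧ r * s = 1 ∧ s * r = 1 := by
  have hu : IsUnit (CFC.sqrt v) := by
    rw [CFC.isUnit_sqrt_iff v hv.nonneg]
    exact hv.isUnit
  have hsa : IsSelfAdjoint (CFC.sqrt v) := IsSelfAdjoint.of_nonneg (CFC.sqrt_nonneg v)
  refine ⟨CFC.sqrt v, Ring.inverse (CFC.sqrt v), hsa, ?_, CFC.sqrt_mul_sqrt_self v hv.nonneg,
    Ring.mul_inverse_cancel _ hu, Ring.inverse_mul_cancel _ hu⟩
  rw [IsSelfAdjoint, ← Ring.inverse_star, hsa.star_eq]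

lemma sub_unique (ι : B →⋆ₐ[ℂ] A) (η : A →L[ℂ] B)
    (hηcp : ∀ n : ℕ, ∀ p : Matrix (Fin n) (Fin n) A,
      (∃ y : Matrix (Fin n) (Fin n) A, p = star y * y) →
      ∃ z : Matrix (Fin n) (Fin n) B, p.map ⇑η = star z * z)
    {v w d q : B} {G H : A} (hv : IsStrictlyPositive v) (hw : IsStrictlyPositive w)
    (hq : IsStrictlyPositive q)
    (h1 : v = q + η (G * ι v * star G)) (h2 : w = q + η (star H * ι w * H))
    (h3 : d = η (G * ι d * H)) : d = 0 := by
  obtain ⟨c, hc0, hc1, hc⟩ := dom hq (add_nonneg hv.nonneg hw.nonneg)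
  have hcv : c • v ≤ q := (smul_le_smul_of_nonneg_left
    (le_add_of_nonneg_right hw.nonneg) hc0.le).trans hc
  have hcw : c • w ≤ q := (smul_le_smul_of_nonneg_left
    (le_add_of_nonneg_left hv.nonneg) hc0.le).trans hc
  obtain ⟨r₁, s₁, hr1, hs1, hrr1, hrs1, hsr1⟩ := exists_root hv
  obtain ⟨r₂, s₂, hr2, hs2, hrr2, hrs2, hsr2⟩ := exists_root hw
  set e := s₁ * d * s₂ with he
  have hred : r₁ * e * r₂ = d := by
    calc r₁ * e * r₂ = (r₁ * s₁) * d * (s₂ * r₂) := by rw [he]; noncomm_ring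
      _ = d := by rw [hrs1, hsr2]; simp
  by_contra hne
  have hene : e ≠ 0 := by
    intro h
    rw [h] at hred
    exact hne (by simpa using hred.symm)
  set t := ‖e‖ with ht
  have htpos : 0 < t := norm_pos_iff.mpr hene
  have hf0 : 0 ≤ algebraMap ℝ B (t ^ 2) - star e * e :=
    sub_nonneg.mpr CStarAlgebra.star_mul_le_algebraMap_norm_sq
  obtain ⟨f, hf⟩ := CStarAlgebra.nonneg_iff_eq_star_mul_self.mp hf0
  have hff : star e * e + star f * f = (t ^ 2) • (1 : B) := by
    rw [← hf, Algebra.algebraMap_eq_smul_one]; abel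
  have hsq : Real.sqrt t * Real.sqrt t = t := Real.mul_self_sqrt htpos.le
  have hsqpos : 0 < Real.sqrt t := Real.sqrt_pos.mpr htpos
  let Y : Matrix (Fin 2) (Fin 2) A :=
    !![Real.sqrt t • (ι r₁ * star G), (Real.sqrt t)⁻¹ • (ι (e * r₂) * H);
       0, (Real.sqrt t)⁻¹ • (ι (f * r₂) * H)]
  obtain ⟨z, hz⟩ := hηcp 2 (star Y * Y) ⟨Y, rfl⟩
  have z00 := congrFun (congrFun hz 0) 0
  have z01 := congrFun (congrFun hz 0) 1
  have z11 := congrFun (congrFun hz 1) 1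
  simp only [Matrix.map_apply, Matrix.mul_apply, Fin.sum_univ_two, Matrix.star_apply] at z00 z01 z11
  have y00 : star (Y 0 0) * Y 0 0 + star (Y 1 0) * Y 1 0 = t • (G * ι v * star G) := by
    simp only [Y, Matrix.of_apply, Matrix.cons_val', Matrix.cons_val_zero, Matrix.cons_val_one,
      Matrix.cons_val_fin_one]
    rw [star_smul, star_mul, star_star, ← map_star, hr1.star_eq, smul_mul_smul_comm, star_trivial,
      hsq, star_zero, zero_mul, add_zero, ← hrr1, map_mul]
    simp only [mul_assoc]
  have y01 : star (Y 0 0) * Y 0 1 + star (Y 1 0) * Y 1 1 = G * ι d * H := by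
    simp only [Y, Matrix.of_apply, Matrix.cons_val', Matrix.cons_val_zero, Matrix.cons_val_one,
      Matrix.cons_val_fin_one]
    rw [star_smul, star_mul, star_star, ← map_star, hr1.star_eq, smul_mul_smul_comm, star_trivial,
      mul_inv_cancel₀ hsqpos.ne', one_smul, star_zero, zero_mul, add_zero, ← hred]
    simp only [mul_assoc, map_mul]
  have y11 : star (Y 0 1) * Y 0 1 + star (Y 1 1) * Y 1 1 = t • (star H * ι w * H) := by
    simp only [Y, Matrix.of_apply, Matrix.cons_val', Matrix.cons_val_zero, Matrix.cons_val_one,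
      Matrix.cons_val_fin_one]
    rw [star_smul, star_mul (ι (e * r₂)) H, ← map_star, smul_mul_smul_comm,
      star_trivial (Real.sqrt t)⁻¹,
      star_smul, star_mul (ι (f * r₂)) H, ← map_star ι (f * r₂), smul_mul_smul_comm,
      star_trivial (Real.sqrt t)⁻¹, ← smul_add]
    have : star H * ι (star (e * r₂)) * (ι (e * r₂) * H) +
        star H * ι (star (f * r₂)) * (ι (f * r₂) * H) =
        star H * ι (r₂ * (star e * e + star f * f) * r₂) * H := by
      simp only [star_mul, hr2.star_eq, map_mul, map_add]
      noncomm_ring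
    rw [this, hff, mul_smul_comm, smul_mul_assoc, mul_one, hrr2, iota_rsmul, mul_smul_comm,
      smul_mul_assoc, smul_smul, ← mul_inv, hsq]
    congr 1
    field_simp
  rw [y00, eta_rsmul] at z00
  rw [y01, ← h3] at z01
  rw [y11, eta_rsmul] at z11
  have hv1 : s₁ * v * s₁ = 1 := by
    calc s₁ * v * s₁ = (s₁ * r₁) * (r₁ * s₁) := by rw [← hrr1]; noncomm_ring
      _ = 1 := by rw [hsr1, hrs1, one_mul]
  have hw1 : s₂ * w * s₂ = 1 := by
    calc s₂ * w * s₂ = (s₂ * r₂) * (r₂ * s₂) := by rw [← hrr2]; noncomm_ring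
      _ = 1 := by rw [hsr2, hrs2, one_mul]
  have bd : ∀ x k : B, x = q + k → c • x ≤ q → t • k ≤ (t * (1 - c)) • x := by
    intro x k hx hcx
    rw [mul_smul]
    refine smul_le_smul_of_nonneg_left ?_ htpos.le
    rw [sub_smul, one_smul]
    rw [show k = x - q by rw [hx]; abel]
    exact sub_le_sub_left hcx x
  have := two_pos_bound (κ := t * (1 - c)) (mul_nonneg htpos.le (by linarith)) hs1 hs2 hv1 hw1 z
    z00 z01 z11 (bd _ _ h1 hcv) (bd _ _ h2 hcw)
  rw [← he, ← ht] at this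
  nlinarith

lemma res_eq (ι : B →⋆ₐ[ℂ] A) (X : A) (s v : B) :
    X - ι (s + Complex.I • v) = (X - ι s) - Complex.I • ι v := by
  rw [map_add, map_smul]; abel

/-- Imaginary part of the subordination equation. -/
lemma im_eq (ι : B →⋆ₐ[ℂ] A) {X : A} (hX : IsSelfAdjoint X) {a₀ : B} (ha₀ : IsSelfAdjoint a₀)
    (η : A →L[ℂ] B) (hpos : ∀ a : A, 0 ≤ a → 0 ≤ η a) {u q s v : B} (hu : IsSelfAdjoint u)
    (hq : IsSelfAdjoint q) (hs : IsSelfAdjoint s) (hv : IsStrictlyPositive v)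
    (h : s + Complex.I • v = u + Complex.I • q + a₀ +
      η (Ring.inverse (X - ι (s + Complex.I • v)))) :
    v = q + η (imP (Ring.inverse ((X - ι s) - Complex.I • ι v))) := by
  have := congrArg imP h
  rwa [imP_cart hs (IsSelfAdjoint.of_nonneg hv.nonneg), imP_add, imP_add, imP_cart hu hq,
    imP_of_sa ha₀, add_zero, res_eq, ← eta_imP η hpos] at this

lemma w_unique (ι : B →⋆ₐ[ℂ] A) {X : A} (hX : IsSelfAdjoint X) {a₀ : B} (ha₀ : IsSelfAdjoint a₀)
    (η : A →L[ℂ] B)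
    (hηcp : ∀ n : ℕ, ∀ p : Matrix (Fin n) (Fin n) A,
      (∃ y : Matrix (Fin n) (Fin n) A, p = star y * y) →
      ∃ z : Matrix (Fin n) (Fin n) B, p.map ⇑η = star z * z)
    {u q s v s' v' : B} (hu : IsSelfAdjoint u)
    (hq : IsStrictlyPositive q) (hs : IsSelfAdjoint s) (hv : IsStrictlyPositive v)
    (hs' : IsSelfAdjoint s') (hv' : IsStrictlyPositive v')
    (h : s + Complex.I • v = u + Complex.I • q + a₀ +
      η (Ring.inverse (X - ι (s + Complex.I • v))))
    (h' : s' + Complex.I • v' = u + Complex.I • q + a₀ +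
      η (Ring.inverse (X - ι (s' + Complex.I • v')))) :
    s + Complex.I • v = s' + Complex.I • v' := by
  have hpos : ∀ a : A, 0 ≤ a → 0 ≤ η a := fun a ha => eta_nonneg η hηcp ha
  have hqs := IsSelfAdjoint.of_nonneg hq.nonneg
  have i1 := im_eq ι hX ha₀ η hpos hu hqs hs hv h
  have i2 := im_eq ι hX ha₀ η hpos hu hqs hs' hv' h'
  have hy := hX.sub (iota_sa ι hs)
  have hy' := hX.sub (iota_sa ι hs')
  rw [im_res1 hy (iota_isp ι hv)] at i1
  rw [im_res2 hy' (iota_isp ι hv')] at i2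
  rw [← sub_eq_zero]
  refine sub_unique ι η hηcp hv hv' hq i1 i2 ?_
  have u1 := unit_res hy (iota_isp ι hv)
  have u2 := unit_res hy' (iota_isp ι hv')
  conv_lhs => rw [h, h']
  rw [add_sub_add_left_eq_sub, ← map_sub, res_eq, res_eq, Ring.inverse_sub_inverse
    (iff_of_true u1 u2)]
  congr 3
  rw [map_sub, map_add, map_add, map_smul, map_smul]
  abel

end cp

/-- Corollary 3.3, first statement: if `η` is continuous and completely
positive (positivity of n×n matrices being expressed via the algebraic characterization
`p ≥ 0 ↔ ∃ y, p = y* y`, valid in any C*-algebra) and `ω` is a self-map of the operator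
upper half-plane of `B` satisfying the subordination equation
`ω(b) = b + a₀ + η((X − ω(b))⁻¹)`, then for every strictly positive `q ∈ B` the map
`u ↦ Re ω(u + iq)` is a bijection of the selfadjoint part of `B` onto itself. -/
theorem re_omega_bijective
    {A B : Type*} [CStarAlgebra A] [PartialOrder A] [StarOrderedRing A]
    [CStarAlgebra B] [PartialOrder B] [StarOrderedRing B]
    (ι : B →⋆ₐ[ℂ] A) (hι : Function.Injective ι)
    (X : A) (hX : IsSelfAdjoint X)
    (a₀ : B) (ha₀ : IsSelfAdjoint a₀)
    (η : A →L[ℂ] B)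
    (hηcp : ∀ n : ℕ, ∀ p : Matrix (Fin n) (Fin n) A, (∃ y : Matrix (Fin n) (Fin n) A, p = star y * y) →
      ∃ z : Matrix (Fin n) (Fin n) B, p.map ⇑η = star z * z)
    (ω : B → B)
    (hω : ∀ b : B, SPos (imP b) →
      SPos (imP (ω b)) ∧ ω b = b + a₀ + η (Ring.inverse (X - ι (ω b)))) :
    ∀ q : B, SPos q →
      Set.BijOn (fun u : B => reP (ω (u + Complex.I • q)))
        {u : B | IsSelfAdjoint u} {u : B | IsSelfAdjoint u} := by
  intro q hq0
  have hq := hq0.isp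
  have hqs := hq0.1
  have hpos : ∀ a : A, 0 ≤ a → 0 ≤ η a := fun a ha => eta_nonneg η hηcp ha
  have hb : ∀ u : B, IsSelfAdjoint u → SPos (imP (u + Complex.I • q)) := by
    intro u hu
    rw [imP_cart hu hqs]; exact hq0
  -- the map `K` on strictly positive elements and its properties
  let K : B → B → B := fun s v => η (Ring.inverse (Wop (X - ι s) (ι v)))
  have hy : ∀ s : B, IsSelfAdjoint s → IsSelfAdjoint (X - ι s) := fun s hs =>
    hX.sub (iota_sa ι hs)
  have hK : ∀ s : B, IsSelfAdjoint s → ∀ v w : B, IsStrictlyPositive v → IsStrictlyPositive w →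
      ∀ t : ℝ, 0 < t → v ≤ t • w → w ≤ t • v → K s v ≤ t • K s w := by
    intro s hs v w hv hw t ht h1 h2
    have h1' := iota_mono ι h1
    have h2' := iota_mono ι h2
    rw [iota_rsmul] at h1' h2'
    have := eta_mono η hpos (Wop_thompson (hy s hs) (iota_isp ι hv) (iota_isp ι hw) ht h1' h2')
    rwa [eta_rsmul] at this
  have himK : ∀ s : B, IsSelfAdjoint s → ∀ v : B, IsStrictlyPositive v →
      η (imP (Ring.inverse ((X - ι s) - Complex.I • ι v))) = K s v := by
    intro s hs v hv
    rw [im_res3 (hy s hs) (iota_isp ι hv)]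
  refine ⟨fun u _ => reP_sa _, ?_, ?_⟩
  · intro u₁ hu₁ u₂ hu₂ he
    obtain ⟨p1, e1⟩ := hω _ (hb u₁ hu₁)
    obtain ⟨p2, e2⟩ := hω _ (hb u₂ hu₂)
    simp only at he
    have c1 := re_add_im (ω (u₁ + Complex.I • q))
    have c2 := re_add_im (ω (u₂ + Complex.I • q))
    rw [he] at c1
    have hs := reP_sa (ω (u₂ + Complex.I • q))
    set s := reP (ω (u₂ + Complex.I • q))
    set v₁ := imP (ω (u₁ + Complex.I • q))
    set v₂ := imP (ω (u₂ + Complex.I • q))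
    rw [← c1] at e1
    rw [← c2] at e2
    have i1 := im_eq ι hX ha₀ η hpos hu₁ hqs hs p1.isp e1
    have i2 := im_eq ι hX ha₀ η hpos hu₂ hqs hs p2.isp e2
    rw [himK s hs _ p1.isp] at i1
    rw [himK s hs _ p2.isp] at i2
    have hvv : v₁ = v₂ := thompson_unique hq (hK s hs) p1.isp p2.isp i1 i2
    rw [hvv] at e1
    have := e1.symm.trans e2
    exact add_right_cancel (add_right_cancel (add_right_cancel this))
  · intro s hs
    change IsSelfAdjoint s at hs
    obtain ⟨v, hv, hfix⟩ := thompson_exists (K := K s) (M := q + η (Ring.inverse (ι q))) hq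
      (fun v hv => hpos _ (isp_inv (Wop_isp (hy s hs) (iota_isp ι hv))).nonneg) (hK s hs)
      (fun v hqv => by
        refine add_le_add_right (eta_mono η hpos ?_) _
        refine (Wop_inv_le (hy s hs) (iota_isp ι (hq.of_le hqv))).trans ?_
        exact CStarAlgebra.ringInverse_le_ringInverse (iota_mono ι hqv) (iota_isp ι hq))
      (fun v hv => by
        have hι : Continuous ι := map_continuous ι
        have h := Wop_cont (hy s hs) (iota_isp ι hv)
        have h2 := ContinuousAt.comp (f := ι) h hι.continuousAt
        exact ContinuousAt.comp (g := η) η.continuous.continuousAt h2)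
    have hvs := IsSelfAdjoint.of_nonneg hv.nonneg
    set G := Ring.inverse ((X - ι s) - Complex.I • ι v) with hG
    rw [← himK s hs v hv, ← hG] at hfix
    let u : B := s - a₀ - reP (η G)
    have hu : IsSelfAdjoint u := (hs.sub ha₀).sub (reP_sa _)
    have hsol : s + Complex.I • v = u + Complex.I • q + a₀ +
        η (Ring.inverse (X - ι (s + Complex.I • v))) := by
      rw [res_eq, ← hG]
      conv_rhs => rw [← re_add_im (η G), ← eta_imP η hpos]
      conv_lhs => rw [hfix]
      rw [smul_add]
      simp only [u]
      abel
    obtain ⟨p1, e1⟩ := hω _ (hb u hu)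
    have c1 := re_add_im (ω (u + Complex.I • q))
    have hs1 := reP_sa (ω (u + Complex.I • q))
    refine ⟨u, hu, ?_⟩
    change reP (ω (u + Complex.I • q)) = s
    rw [← c1] at e1
    have := w_unique ι hX ha₀ η hηcp hu hq hs1 p1.isp hs hv (by rwa [c1] at e1 ⊢) hsol
    rw [c1] at this
    rw [this, reP_cart hs hvs]
end
end

section
/- Let A be a unital C*-algebra, B ⊆ A a unital C*-subalgebra, X a selfadjoint element of A, a₀ a selfadjoint element of B, and η : A → B a continuous 2-positive linear map. Let b₁, b₂, w₁, w₂ ∈ B all have strictly positive imaginary parts and satisfy wⱼ = bⱼ + a₀ + η((X − wⱼ)⁻¹) for j = 1, 2. Then the continuous linear operator ΔH : B → B defined by ΔH(c) = c − η((X − w₁)⁻¹ c (X − w₂)⁻¹) is invertible, its spectrum (as an element of the Banach algebra of bounded linear operators on B) is contained in the open disc {z ∈ ℂ : |z − 1| < 1}, and the spectrum of its inverse Δω := (ΔH)⁻¹ is contained in the half-plane {z ∈ ℂ : Re z > 1/2}. -/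
noncomputable section

open Filter Topology
open scoped ComplexOrder

lemma aux_cs {B : Type*} [CStarAlgebra B] [PartialOrder B] [StarOrderedRing B] (a b d e : B) :
    ‖star a * d + star b * e‖ ^ 2 ≤ ‖star a * a + star b * b‖ * ‖star d * d + star e * e‖ := by
  let x : WithCStarModule B (B × B) := (WithCStarModule.equiv B (B × B)).symm (star d, star e)
  let y : WithCStarModule B (B × B) := (WithCStarModule.equiv B (B × B)).symm (star a, star b)
  have h := CStarModule.norm_inner_le (A := B) (WithCStarModule B (B × B)) (x := x) (y := y)
  have hxy : inner B x y = star a * d + star b * e := by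
    rw [WithCStarModule.prod_inner]
    change star a * star (star d) + star b * star (star e) = _
    simp
  have hx : ‖x‖ ^ 2 = ‖star d * d + star e * e‖ := by
    rw [WithCStarModule.prod_norm_sq]
    change ‖star d * star (star d) + star e * star (star e)‖ = _
    simp
  have hy : ‖y‖ ^ 2 = ‖star a * a + star b * b‖ := by
    rw [WithCStarModule.prod_norm_sq]
    change ‖star a * star (star a) + star b * star (star b)‖ = _
    simp
  rw [hxy] at h
  rw [← hx, ← hy, ← mul_pow, mul_comm ‖y‖]
  exact pow_le_pow_left₀ (norm_nonneg _) h 2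

lemma aux_two {A B : Type*} [CStarAlgebra A] [CStarAlgebra B]
    (η : A →L[ℂ] B)
    (hη2 : ∀ p : Matrix (Fin 2) (Fin 2) A, (∃ y : Matrix (Fin 2) (Fin 2) A, p = star y * y) →
      ∃ z : Matrix (Fin 2) (Fin 2) B, p.map ⇑η = star z * z) (u t : A) :
    ∃ a b d e : B, η (u * star u) = star a * a + star b * b ∧
      η (u * t) = star a * d + star b * e ∧
      η (star t * star u) = star d * a + star e * b ∧
      η (star t * t) = star d * d + star e * e := by
  obtain ⟨z, hz⟩ := hη2 _ ⟨!![star u, t; 0, 0], rfl⟩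
  refine ⟨z 0 0, z 1 0, z 0 1, z 1 1, ?_, ?_, ?_, ?_⟩
  · simpa [Matrix.mul_apply, Matrix.star_apply] using congrFun (congrFun hz 0) 0
  · simpa [Matrix.mul_apply, Matrix.star_apply] using congrFun (congrFun hz 0) 1
  · simpa [Matrix.mul_apply, Matrix.star_apply] using congrFun (congrFun hz 1) 0
  · simpa [Matrix.mul_apply, Matrix.star_apply] using congrFun (congrFun hz 1) 1

lemma aux_star {A B : Type*} [CStarAlgebra A] [CStarAlgebra B]
    (η : A →L[ℂ] B)
    (hη2 : ∀ p : Matrix (Fin 2) (Fin 2) A, (∃ y : Matrix (Fin 2) (Fin 2) A, p = star y * y) →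
      ∃ z : Matrix (Fin 2) (Fin 2) B, p.map ⇑η = star z * z) (t : A) :
    η (star t) = star (η t) := by
  obtain ⟨a, b, d, e, -, h1, h2, -⟩ := aux_two η hη2 1 t
  rw [one_mul] at h1
  rw [star_one, mul_one] at h2
  rw [h1, h2]; simp

lemma aux_mono {A B : Type*} [CStarAlgebra A] [PartialOrder A] [StarOrderedRing A]
    [CStarAlgebra B] [PartialOrder B] [StarOrderedRing B]
    (η : A →L[ℂ] B)
    (hη2 : ∀ p : Matrix (Fin 2) (Fin 2) A, (∃ y : Matrix (Fin 2) (Fin 2) A, p = star y * y) →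
      ∃ z : Matrix (Fin 2) (Fin 2) B, p.map ⇑η = star z * z) (s : A) (hs : 0 ≤ s) :
    0 ≤ η s := by
  obtain ⟨t, rfl⟩ := CStarAlgebra.nonneg_iff_eq_star_mul_self.mp hs
  obtain ⟨a, b, d, e, -, -, -, h⟩ := aux_two η hη2 1 t
  rw [h]
  exact add_nonneg (star_mul_self_nonneg _) (star_mul_self_nonneg _)

lemma aux_key {A B : Type*} [CStarAlgebra A] [PartialOrder A] [StarOrderedRing A]
    [CStarAlgebra B] [PartialOrder B] [StarOrderedRing B]
    (η : A →L[ℂ] B)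
    (hη2 : ∀ p : Matrix (Fin 2) (Fin 2) A, (∃ y : Matrix (Fin 2) (Fin 2) A, p = star y * y) →
      ∃ z : Matrix (Fin 2) (Fin 2) B, p.map ⇑η = star z * z) (u t : A) (r s : B) :
    ‖star r * η (u * t) * s‖ ^ 2 ≤
      ‖star r * η (u * star u) * r‖ * ‖star s * η (star t * t) * s‖ := by
  obtain ⟨a, b, d, e, h1, h2, -, h3⟩ := aux_two η hη2 u t
  have h := aux_cs (a * r) (b * r) (d * s) (e * s)
  rw [h1, h2, h3]
  simpa only [star_mul, mul_add, add_mul, mul_assoc] using h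

lemma aux_sqrt {B : Type*} [CStarAlgebra B] [PartialOrder B] [StarOrderedRing B] (v : B)
    (hv : SPos v) : ∃ g : Bˣ, star (g : B) = g ∧ star (↑g⁻¹ : B) = ↑g⁻¹ ∧ (g : B) * g = v := by
  have h1 : CFC.sqrt v * CFC.sqrt v = v := CFC.sqrt_mul_sqrt_self v hv.2.1
  have h2 : IsUnit (CFC.sqrt v) := by
    rw [← isUnit_mul_self_iff, h1]; exact hv.2.2
  have h3 : IsSelfAdjoint (CFC.sqrt v) := .of_nonneg (CFC.sqrt_nonneg v)
  obtain ⟨g, hg⟩ := h2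
  have h4 : star (g : B) = g := by rw [hg]; exact h3
  have h5 : star g = g := Units.ext (by simpa using h4)
  refine ⟨g, h4, ?_, by rw [hg, h1]⟩
  rw [← Units.coe_star_inv, h5]

/-- `Im (X - w)⁻¹` identities and invertibility. -/
lemma aux_unit {A : Type*} [CStarAlgebra A] (X : A) (hX : IsSelfAdjoint X) (w : A) (g : Aˣ)
    (hg : star (g : A) = g) (hg' : star (↑g⁻¹ : A) = ↑g⁻¹) (hgw : (g : A) * g = imP w) :
    IsUnit (X - w) := by
  have hw : w = reP w + Complex.I • ((g : A) * g) := by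
    rw [hgw, reP, imP, smul_smul, mul_inv, mul_left_comm, mul_inv_cancel₀ Complex.I_ne_zero,
      mul_one, ← smul_add]
    rw [add_add_sub_cancel, ← two_smul ℂ, smul_smul]; norm_num
  have hr : IsSelfAdjoint (reP w) := by
    rw [IsSelfAdjoint, reP, star_smul, star_add, star_star, add_comm]
    simp
  let Y : A := ↑g⁻¹ * (X - reP w) * ↑g⁻¹
  have hY : IsSelfAdjoint Y := by
    rw [IsSelfAdjoint]
    simp only [Y, star_mul, hg', (hX.sub hr).star_eq, mul_assoc]
  have hI : IsUnit (algebraMap ℂ A Complex.I - Y) := by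
    by_contra h
    have h2 : Complex.I ∈ spectrum ℂ Y := h
    have := hY.mem_spectrum_eq_re h2
    have := congrArg Complex.im this
    simp at this
  have : X - w = -((g : A) * (algebraMap ℂ A Complex.I - Y) * g) := by
    conv_lhs => rw [hw]
    simp only [Y, mul_sub, sub_mul, mul_assoc, Units.inv_mul, mul_one, Units.mul_inv_cancel_left,
      Algebra.algebraMap_eq_smul_one, smul_mul_assoc, mul_smul_comm, one_mul]
    abel
  rw [this]
  exact ((g.isUnit.mul hI).mul g.isUnit).neg

lemma aux_im {A : Type*} [CStarAlgebra A] (X : A) (hX : IsSelfAdjoint X) (w : A)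
    (hu : IsUnit (X - w)) :
    imP (Ring.inverse (X - w)) = Ring.inverse (X - w) * imP w * star (Ring.inverse (X - w)) ∧
    imP (Ring.inverse (X - w)) = star (Ring.inverse (X - w)) * imP w * Ring.inverse (X - w) := by
  obtain ⟨U, hU⟩ := hu
  have h1 : w - star w = star (U : A) - U := by
    rw [hU, star_sub, hX.star_eq]; abel
  have h2 : star (↑U⁻¹ : A) * star (U : A) = 1 := by rw [← star_mul]; simp
  have h3 : star (U : A) * star (↑U⁻¹ : A) = 1 := by rw [← star_mul]; simp
  rw [← hU, Ring.inverse_unit]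
  simp only [imP, h1, mul_smul_comm, smul_mul_assoc, mul_sub, sub_mul, mul_assoc, h2, h3]
  simp [← mul_assoc, h2]

lemma aux_norm {B : Type*} [CStarAlgebra B] [PartialOrder B] [StarOrderedRing B] [Nontrivial B]
    (g : Bˣ) (hg' : star (↑g⁻¹ : B) = ↑g⁻¹) (P m : B) (hP : 0 ≤ P) (hm : SPos m)
    (h : (g : B) * g = m + P) : ‖(↑g⁻¹ : B) * P * ↑g⁻¹‖ < 1 := by
  have hc : ∀ x : B, 0 ≤ x → 0 ≤ (↑g⁻¹ : B) * x * ↑g⁻¹ := by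
    intro x hx
    have := star_left_conjugate_nonneg hx (↑g⁻¹ : B)
    rwa [hg'] at this
  have h1 : 1 - (↑g⁻¹ : B) * P * ↑g⁻¹ = (↑g⁻¹ : B) * m * ↑g⁻¹ := by
    rw [eq_sub_of_add_eq h.symm]
    simp [mul_sub, sub_mul, mul_assoc]
  have h0 := hc P hP
  have hle : ‖(↑g⁻¹ : B) * P * ↑g⁻¹‖ ≤ 1 := by
    rw [CStarAlgebra.norm_le_one_iff_of_nonneg _ h0, ← sub_nonneg, h1]
    exact hc m hm.2.1
  refine lt_of_le_of_ne hle fun h2 => ?_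
  have h3 := CStarAlgebra.norm_mem_spectrum_of_nonneg h0
  rw [h2] at h3
  apply h3
  change IsUnit (algebraMap ℝ B 1 - _)
  rw [map_one, h1]
  exact (g⁻¹.isUnit.mul hm.2.2).mul g⁻¹.isUnit

/-- All facts about a single solution of the subordination equation. -/
lemma aux_sol {A B : Type*} [CStarAlgebra A] [PartialOrder A] [StarOrderedRing A]
    [CStarAlgebra B] [PartialOrder B] [StarOrderedRing B] [Nontrivial B]
    (ι : B →⋆ₐ[ℂ] A)
    (X : A) (hX : IsSelfAdjoint X)
    (a₀ : B) (ha₀ : IsSelfAdjoint a₀)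
    (η : A →L[ℂ] B)
    (hη2 : ∀ p : Matrix (Fin 2) (Fin 2) A, (∃ y : Matrix (Fin 2) (Fin 2) A, p = star y * y) →
      ∃ z : Matrix (Fin 2) (Fin 2) B, p.map ⇑η = star z * z)
    (b w : B) (hb : SPos (imP b)) (hw : SPos (imP w))
    (heq : w = b + a₀ + η (Ring.inverse (X - ι w))) :
    ∃ g : Bˣ, star (g : B) = g ∧ star (↑g⁻¹ : B) = ↑g⁻¹ ∧
      ‖(↑g⁻¹ : B) * η (Ring.inverse (X - ι w) * ι (g * g) * star (Ring.inverse (X - ι w)))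
        * ↑g⁻¹‖ < 1 ∧
      ‖(↑g⁻¹ : B) * η (star (Ring.inverse (X - ι w)) * ι (g * g) * Ring.inverse (X - ι w))
        * ↑g⁻¹‖ < 1 := by
  obtain ⟨g, hg, hg', hgw⟩ := aux_sqrt _ hw
  have hιw : ι (imP w) = imP (ι w) := by simp [imP, map_star]
  have hu : IsUnit (X - ι w) := by
    refine aux_unit X hX (ι w) (Units.map (ι : B →* A) g) ?_ ?_ ?_
    · change star (ι g) = ι g
      rw [← map_star, hg]
    · change star (ι ↑g⁻¹) = ι ↑g⁻¹
      rw [← map_star, hg']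
    · change ι g * ι g = _
      rw [← map_mul, hgw, hιw]
  obtain ⟨h1, h2⟩ := aux_im X hX (ι w) hu
  set R := Ring.inverse (X - ι w) with hR
  have him : imP w = imP b + η (imP R) := by
    conv_lhs => rw [heq]
    simp only [imP, map_smul, map_sub, aux_star η hη2, star_add, ha₀.star_eq, ← smul_add]
    congr 1
    abel
  have hpos : 0 ≤ η (imP R) := by
    refine aux_mono η hη2 _ ?_
    rw [h2]
    refine star_left_conjugate_nonneg ?_ R
    rw [← hιw, ← hgw, map_mul]
    have := star_mul_self_nonneg (ι (g : B))
    rwa [← map_star, hg] at this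
  have hn := aux_norm g hg' _ _ hpos hb (hgw.trans him)
  refine ⟨g, hg, hg', ?_, ?_⟩
  · rw [hgw, hιw, ← h1]; exact hn
  · rw [hgw, hιw, ← h2]; exact hn

lemma aux_disc (z : ℂ) (hz : z⁻¹ ∈ Metric.ball (1 : ℂ) 1) : 1 / 2 < z.re := by
  have hz0 : z ≠ 0 := by
    rintro rfl
    simp at hz
  rw [mem_ball_iff_norm] at hz
  have h1 : ‖1 - z‖ < ‖z‖ := by
    have : 1 - z = (z⁻¹ - 1) * z := by field_simp
    rw [this, norm_mul]
    have := norm_pos_iff.mpr hz0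
    nlinarith
  have h2 : ‖1 - z‖ ^ 2 < ‖z‖ ^ 2 := pow_lt_pow_left₀ h1 (norm_nonneg _) (by norm_num)
  rw [Complex.sq_norm, Complex.sq_norm, Complex.normSq_apply, Complex.normSq_apply] at h2
  simp at h2
  nlinarith

/-- Proposition 4.1, with 2-positivity: if `w₁, w₂` solve the subordination
equation at `b₁, b₂` (all with strictly positive imaginary parts), then the difference
quotient `ΔH(c) = c − η((X − w₁)⁻¹ c (X − w₂)⁻¹)` is an invertible bounded operator on `B`,
its spectrum lies in the open disc of center 1 and radius 1, and the spectrum of its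
inverse `Δω = (ΔH)⁻¹` lies in the half-plane `Re z > 1/2`. -/
theorem difference_quotient_spectrum
    {A B : Type*} [CStarAlgebra A] [PartialOrder A] [StarOrderedRing A]
    [CStarAlgebra B] [PartialOrder B] [StarOrderedRing B]
    (ι : B →⋆ₐ[ℂ] A) (hι : Function.Injective ι)
    (X : A) (hX : IsSelfAdjoint X)
    (a₀ : B) (ha₀ : IsSelfAdjoint a₀)
    (η : A →L[ℂ] B)
    (hη2 : ∀ p : Matrix (Fin 2) (Fin 2) A, (∃ y : Matrix (Fin 2) (Fin 2) A, p = star y * y) →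
      ∃ z : Matrix (Fin 2) (Fin 2) B, p.map ⇑η = star z * z)
    (b₁ b₂ w₁ w₂ : B)
    (hb₁ : SPos (imP b₁)) (hb₂ : SPos (imP b₂))
    (hw₁ : SPos (imP w₁)) (hw₂ : SPos (imP w₂))
    (heq₁ : w₁ = b₁ + a₀ + η (Ring.inverse (X - ι w₁)))
    (heq₂ : w₂ = b₂ + a₀ + η (Ring.inverse (X - ι w₂))) :
    ∃ T : B →L[ℂ] B,
      (∀ c : B, T c = c - η (Ring.inverse (X - ι w₁) * ι c * Ring.inverse (X - ι w₂))) ∧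
      IsUnit T ∧
      spectrum ℂ T ⊆ Metric.ball (1 : ℂ) 1 ∧
      spectrum ℂ (Ring.inverse T) ⊆ {z : ℂ | 1 / 2 < z.re} := by
  let R₁ := Ring.inverse (X - ι w₁)
  let R₂ := Ring.inverse (X - ι w₂)
  let ιL : B →L[ℂ] A := ⟨ι.toAlgHom.toLinearMap, map_continuous ι⟩
  let Φ : B →L[ℂ] B := η ∘L (ContinuousLinearMap.mulLeftRight ℂ A R₁ R₂) ∘L ιL
  have hΦ : ∀ c, Φ c = η (R₁ * ι c * R₂) := fun c => rfl
  refine ⟨1 - Φ, fun c => rfl, ?_⟩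
  rcases subsingleton_or_nontrivial B with hB | hB
  · have : Subsingleton (B →L[ℂ] B) := ⟨fun f g => by ext x; exact Subsingleton.elim _ _⟩
    refine ⟨isUnit_of_subsingleton _, ?_, ?_⟩ <;> simp [spectrum.of_subsingleton]
  obtain ⟨g, hg, hg', hng, -⟩ := aux_sol ι X hX a₀ ha₀ η hη2 b₁ w₁ hb₁ hw₁ heq₁
  obtain ⟨k, hk, hk', -, hnk⟩ := aux_sol ι X hX a₀ ha₀ η hη2 b₂ w₂ hb₂ hw₂ heq₂
  change ‖(↑g⁻¹ : B) * η (R₁ * ι (g * g) * star R₁) * ↑g⁻¹‖ < 1 at hng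
  change ‖(↑k⁻¹ : B) * η (star R₂ * ι (k * k) * R₂) * ↑k⁻¹‖ < 1 at hnk
  set α := ‖(↑g⁻¹ : B) * η (R₁ * ι (g * g) * star R₁) * ↑g⁻¹‖ with hα
  set β := ‖(↑k⁻¹ : B) * η (star R₂ * ι (k * k) * R₂) * ↑k⁻¹‖ with hβ
  let S : (B →L[ℂ] B)ˣ :=
    { val := ContinuousLinearMap.mulLeftRight ℂ B g k
      inv := ContinuousLinearMap.mulLeftRight ℂ B ↑g⁻¹ ↑k⁻¹
      val_inv := by ext x; simp [mul_assoc]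
      inv_val := by ext x; simp [mul_assoc] }
  let Ψ : B →L[ℂ] B := ↑S⁻¹ * Φ * ↑S
  have hΨ : ∀ c, Ψ c = ↑g⁻¹ * η (R₁ * ι (g * c * k) * R₂) * ↑k⁻¹ := fun c => rfl
  have hbound : ∀ c, ‖Ψ c‖ ^ 2 ≤ (α * β) * ‖c‖ ^ 2 := by
    intro c
    have h := aux_key η hη2 (R₁ * ι g) (ι (c * k) * R₂) ↑g⁻¹ ↑k⁻¹
    rw [hg', hk'] at h
    have e1 : R₁ * ι g * (ι (c * k) * R₂) = R₁ * ι (g * c * k) * R₂ := by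
      simp [mul_assoc]
    have e2 : R₁ * ι g * star (R₁ * ι g) = R₁ * ι (g * g) * star R₁ := by
      rw [star_mul, ← map_star, hg]; simp [mul_assoc]
    have e3 : star (ι (c * k) * R₂) * (ι (c * k) * R₂)
        = star (ι k * R₂) * ι (star c * c) * (ι k * R₂) := by
      simp [star_mul, map_star, mul_assoc]
    have e4 : star (ι k * R₂) * (ι k * R₂) = star R₂ * ι (k * k) * R₂ := by
      rw [star_mul, ← map_star, hk]; simp [mul_assoc]
    rw [e1, e2, ← hΨ, ← hα] at h
    refine h.trans ?_
    rw [mul_assoc α]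
    refine mul_le_mul_of_nonneg_left ?_ (norm_nonneg _)
    have hcc : ι (star c * c) ≤ algebraMap ℝ A (‖c‖ ^ 2) := by
      rw [map_mul, map_star]
      refine (CStarAlgebra.star_mul_le_algebraMap_norm_sq).trans ?_
      refine algebraMap_mono A ?_
      exact pow_le_pow_left₀ (norm_nonneg _) (NonUnitalStarAlgHom.norm_apply_le ι c) 2
    have hle : star (ι (c * k) * R₂) * (ι (c * k) * R₂)
        ≤ ((‖c‖ ^ 2 : ℝ) : ℂ) • (star R₂ * ι (k * k) * R₂) := by
      rw [e3, ← e4]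
      refine (star_left_conjugate_le_conjugate hcc _).trans_eq ?_
      rw [Algebra.algebraMap_eq_smul_one, mul_smul_comm, smul_mul_assoc, mul_one]
      exact (Complex.coe_smul _ _).symm
    have hle2 := sub_nonneg.mpr hle
    have hle3 := aux_mono η hη2 _ hle2
    rw [map_sub, sub_nonneg, map_smul] at hle3
    have hle4 := star_left_conjugate_le_conjugate hle3 (↑k⁻¹ : B)
    rw [hk'] at hle4
    have h0 := star_left_conjugate_nonneg
      (aux_mono η hη2 _ (star_mul_self_nonneg (ι (c * k) * R₂))) (↑k⁻¹ : B)
    rw [hk'] at h0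
    refine (CStarAlgebra.norm_le_norm_of_nonneg_of_le h0 hle4).trans_eq ?_
    rw [mul_smul_comm, smul_mul_assoc, norm_smul, ← hβ, mul_comm]
    simp
  have hα0 : 0 ≤ α := norm_nonneg _
  have hβ0 : 0 ≤ β := norm_nonneg _
  have hαβ : α * β < 1 := by nlinarith
  have hΨn : ‖Ψ‖ < 1 := by
    refine lt_of_le_of_lt (Ψ.opNorm_le_bound (Real.sqrt_nonneg (α * β)) fun c => ?_)
      ((Real.sqrt_lt' one_pos).mpr (by simpa using hαβ))
    refine (sq_le_sq₀ (norm_nonneg _) (by positivity)).mp ?_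
    rw [mul_pow, Real.sq_sqrt (mul_nonneg hα0 hβ0)]
    exact hbound c
  have hspecΦ : ∀ z ∈ spectrum ℂ Φ, ‖z‖ < 1 := by
    intro z hz
    rw [← spectrum.units_conjugate' (u := S)] at hz
    exact (spectrum.norm_le_norm_of_mem hz).trans_lt hΨn
  have hspec : spectrum ℂ (1 - Φ) ⊆ Metric.ball (1 : ℂ) 1 := by
    intro z hz
    rw [← map_one (algebraMap ℂ (B →L[ℂ] B)), ← spectrum.singleton_sub_eq] at hz
    obtain ⟨_, rfl, y, hy, rfl⟩ := hz
    rw [mem_ball_iff_norm]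
    simpa using hspecΦ y hy
  have hunit : IsUnit (1 - Φ) := by
    rw [← spectrum.zero_notMem_iff ℂ]
    intro h
    simpa using hspec h
  refine ⟨hunit, hspec, ?_⟩
  obtain ⟨U, hU⟩ := hunit
  rw [← hU] at hspec ⊢
  rw [Ring.inverse_unit, ← spectrum.map_inv]
  intro z hz
  exact aux_disc z (hspec hz)
end
end

section
/- Let A be a unital C*-algebra, B ⊆ A a unital C*-subalgebra, X a selfadjoint element of A, a₀ a selfadjoint element of B, and η : A → B a continuous completely positive linear map. Let H⁺(B) = {b ∈ B : Im b is strictly positive} and suppose ω : H⁺(B) → H⁺(B) satisfies ω(b) = b + a₀ + η((X − ω(b))⁻¹) for all b ∈ H⁺(B). Let α ∈ B be selfadjoint, v ∈ B strictly positive, and suppose there is a sequence (yₙ) of positive reals converging to 0 such that ω(α + i yₙ v) converges in norm to a selfadjoint element ω₀ ∈ B, and such that ℓ := limₙ Im ω(α + i yₙ v)/‖Im ω(α + i yₙ v)‖ exists in norm and is strictly positive. Then for every state φ on B and every strictly positive u ∈ B, liminf over y → 0⁺ of φ(Im η((X − ω₀ − i y u)⁻¹))/y is finite; in fact there exists ε₀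 > 0 such that φ(Im η((X − ω₀ − i y u)⁻¹)) ≤ y/ε₀ for all y > 0. -/
noncomputable section

open Filter Topology
open scoped ComplexOrder

section helpers

set_option linter.unusedSectionVars false
set_option linter.unusedVariables false

variable {A : Type*} [CStarAlgebra A] [PartialOrder A] [StarOrderedRing A]

lemma aux_isUnit (h p : A) (hh : IsSelfAdjoint h) (hp : SPos p) :
    IsUnit (h - Complex.I • p) := by
  have hsp : IsStrictlyPositive p := IsStrictlyPositive.iff_of_unital.mpr ⟨hp.2.1, hp.2.2⟩
  have hs : IsUnit (CFC.sqrt p) := hsp.isUnit_cfcSqrt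
  have hss : CFC.sqrt p * CFC.sqrt p = p := CFC.sqrt_mul_sqrt_self p hp.2.1
  have hsa : IsSelfAdjoint (CFC.sqrt p) := (CFC.sqrt_nonneg p).isSelfAdjoint
  obtain ⟨s, hs'⟩ := hs
  rw [← hs'] at hss hsa
  have hsi : star ((s⁻¹ : Aˣ) : A) = ((s⁻¹ : Aˣ) : A) := by
    have h1 : star ((s⁻¹ : Aˣ) : A) * (s : A) = 1 := by
      calc star ((s⁻¹ : Aˣ) : A) * (s : A) = star ((s⁻¹ : Aˣ) : A) * star (s : A) := by
            rw [hsa.star_eq]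
        _ = 1 := by rw [← star_mul, Units.mul_inv, star_one]
    exact Units.eq_inv_of_mul_eq_one_right h1
  have hG : IsSelfAdjoint (((s⁻¹ : Aˣ) : A) * h * ((s⁻¹ : Aˣ) : A)) := by
    rw [IsSelfAdjoint, star_mul, star_mul, hsi, hh.star_eq, mul_assoc]
  have hU : IsUnit (algebraMap ℂ A Complex.I - ((s⁻¹ : Aˣ) : A) * h * ((s⁻¹ : Aˣ) : A)) := by
    by_contra hc
    have := hG.im_eq_zero_of_mem_spectrum (z := Complex.I) hc
    simp at this
  have e : h - Complex.I • p = -((s : A) * (algebraMap ℂ A Complex.I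
      - ((s⁻¹ : Aˣ) : A) * h * ((s⁻¹ : Aˣ) : A)) * (s : A)) := by
    rw [mul_sub, sub_mul, ← hss, Algebra.algebraMap_eq_smul_one]
    simp [mul_assoc]
  rw [e]
  exact ((s.isUnit.mul hU).mul s.isUnit).neg

lemma aux_imP_inv (X w R : A) (hX : IsSelfAdjoint X) (h1 : R * (X - w) = 1)
    (h2 : (X - w) * R = 1) : imP R = R * imP w * star R := by
  have h3 : star (X - w) * star R = 1 := by rw [← star_mul, h1, star_one]
  have e : R - star R = R * (w - star w) * star R := by
    have : w - star w = star (X - w) - (X - w) := by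
      rw [star_sub, hX.star_eq]; abel
    rw [this, mul_sub, sub_mul, mul_assoc, h3, h1]; simp
  simp only [imP]
  rw [e]
  simp only [mul_smul_comm, smul_mul_assoc]

lemma aux_key_s6 (X a b R Q q qi : A) (hX : IsSelfAdjoint X)
    (hR1 : R * (X - a) = 1) (hR2 : (X - a) * R = 1)
    (hQ1 : Q * (X - b) = 1) (hQ2 : (X - b) * Q = 1)
    (hb : 0 ≤ imP b) (hq : imP a = q) (hq0 : 0 ≤ q) (hqi : star qi = qi)
    (h1 : q * qi = 1) (h2 : qi * q = 1) :
    imP R ≤ Q * (star (a - star b) * qi * (a - star b)) * star Q := by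
  set d := a - star b with hd
  have hRim := aux_imP_inv X a R hX hR1 hR2
  have hQim := aux_imP_inv X b Q hX hQ1 hQ2
  rw [hq] at hRim
  have hQpos : 0 ≤ imP Q := by rw [hQim]; exact star_right_conjugate_nonneg hb Q
  have hQs : star (X - b) * star Q = 1 := by rw [← star_mul, hQ1, star_one]
  have e : R - star Q = R * d * star Q := by
    have : d = star (X - b) - (X - a) := by
      rw [star_sub, hX.star_eq, hd]; abel
    rw [this, mul_sub, sub_mul, mul_assoc, hQs, hR1]; simp
  have e' : star R - Q = Q * star d * star R := by
    have := congrArg star e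
    simpa [mul_assoc] using this
  have hqs : star q = q := hq0.isSelfAdjoint.star_eq
  have hW := star_right_conjugate_nonneg hq0 (R - Complex.I • (Q * star d * qi))
  have key : (R - Complex.I • (Q * star d * qi)) * q * star (R - Complex.I • (Q * star d * qi))
      = Q * (star d * qi * d) * star Q - imP R - (imP Q + imP Q) := by
    have t1 : (R - Complex.I • (Q * star d * qi)) * q = R * q - Complex.I • (Q * star d) := by
      rw [sub_mul, smul_mul_assoc, mul_assoc (Q * star d), h2, mul_one]
    have t2 : star (R - Complex.I • (Q * star d * qi))
        = star R + Complex.I • (qi * d * star Q) := by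
      simp [star_sub, star_smul, hqi, mul_assoc]
    rw [t1, t2, sub_mul, mul_add, mul_add, ← hRim]
    have t3 : R * q * Complex.I • (qi * d * star Q) = Complex.I • (R - star Q) := by
      rw [mul_smul_comm, e]; congr 1
      calc R * q * (qi * d * star Q) = R * (q * qi) * d * star Q := by noncomm_ring
        _ = _ := by rw [h1, mul_one]
    have t4 : (Complex.I • (Q * star d)) * star R = Complex.I • (star R - Q) := by
      rw [smul_mul_assoc, e']
    have t5 : (Complex.I • (Q * star d)) * Complex.I • (qi * d * star Q)
        = - (Q * (star d * qi * d) * star Q) := by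
      rw [smul_mul_smul_comm, Complex.I_mul_I, neg_one_smul]; congr 1; noncomm_ring
    rw [t3, t4, t5]
    simp only [imP, mul_inv, Complex.inv_I]
    module
  rw [key] at hW
  have : imP R + (imP Q + imP Q) ≤ Q * (star d * qi * d) * star Q := by
    rw [← sub_nonneg, ← sub_sub]; exact hW
  exact le_trans (le_add_of_nonneg_right (add_nonneg hQpos hQpos)) this

lemma aux_im_sa (b : A) : IsSelfAdjoint (imP b) := by
  rw [IsSelfAdjoint, imP, star_smul]
  simp only [star_sub, star_star, mul_inv, Complex.inv_I]
  simp
  module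

lemma aux_re_im (b : A) : b = reP b + Complex.I • imP b := by
  simp only [reP, imP, smul_smul, mul_inv, Complex.inv_I]
  have : Complex.I * (2⁻¹ * -Complex.I) = 2⁻¹ := by
    linear_combination (-2⁻¹ : ℂ) * Complex.I_mul_I
  rw [this]
  module

lemma aux_re_sa (b : A) : IsSelfAdjoint (reP b) := by
  rw [IsSelfAdjoint, reP, star_smul]
  simp [add_comm]

lemma aux_isUnit_sub (X w : A) (hX : IsSelfAdjoint X) (hw : SPos (imP w)) :
    IsUnit (X - w) := by
  have := aux_isUnit (X - reP w) (imP w) (hX.sub (aux_re_sa w)) hw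
  rwa [sub_sub, ← aux_re_im] at this

lemma aux_imP_add_smul (a u : A) (ha : IsSelfAdjoint a) (hu : IsSelfAdjoint u) (t : ℝ) :
    imP (a + ((t : ℂ) * Complex.I) • u) = t • u := by
  have e : (t • u : A) = (t : ℂ) • u := (Complex.coe_smul t u).symm
  rw [imP, star_add, star_smul, ha.star_eq, hu.star_eq, e, add_sub_add_left_eq_sub, ← sub_smul,
    smul_smul]
  congr 1
  simp
  linear_combination (-t : ℂ) * Complex.I_mul_I

lemma aux_spos_smul (u : A) (hu : SPos u) (t : ℝ) (ht : 0 < t) : SPos (t • u) := by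
  refine ⟨?_, smul_nonneg ht.le hu.2.1, ?_⟩
  · exact (smul_nonneg ht.le hu.2.1).isSelfAdjoint
  · obtain ⟨w, hw⟩ := hu.2.2
    rw [← hw]
    exact ((Units.mk0 t ht.ne') • w).isUnit

lemma aux_spos_map {B : Type*} [CStarAlgebra B] [PartialOrder B] [StarOrderedRing B]
    (ι : B →⋆ₐ[ℂ] A) (b : B) (hb : SPos b) : SPos (ι b) :=
  ⟨hb.1.map ι, map_nonneg ι hb.2.1, hb.2.2.map ι⟩

lemma aux_imP_map {B : Type*} [CStarAlgebra B]
    (ι : B →⋆ₐ[ℂ] A) (b : B) : imP (ι b) = ι (imP b) := by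
  simp [imP, map_smul, map_sub, map_star]

lemma aux_lower [Nontrivial A] (l : A) (hl : SPos l) : ∃ c : ℝ, 0 < c ∧ algebraMap ℝ A c ≤ l := by
  rw [CFC.exists_pos_algebraMap_le_iff hl.1]
  have hsp : IsStrictlyPositive l := IsStrictlyPositive.iff_of_unital.mpr ⟨hl.2.1, hl.2.2⟩
  exact fun x hx => (CStarAlgebra.isStrictlyPositive_iff_isSelfAdjoint_and_spectrum_pos.mp hsp).2 x hx

lemma aux_eta_nonneg {B : Type*} [CStarAlgebra B] [PartialOrder B] [StarOrderedRing B]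
    (η : A →L[ℂ] B)
    (hηcp : ∀ n : ℕ, ∀ p : Matrix (Fin n) (Fin n) A,
      (∃ y : Matrix (Fin n) (Fin n) A, p = star y * y) →
      ∃ z : Matrix (Fin n) (Fin n) B, p.map ⇑η = star z * z) (a : A) (ha : 0 ≤ a) :
    0 ≤ η a := by
  obtain ⟨b, hb⟩ := CStarAlgebra.nonneg_iff_eq_star_mul_self.mp ha
  obtain ⟨z, hz⟩ := hηcp 1 (Matrix.of fun _ _ => a) ⟨Matrix.of fun _ _ => b, by
    ext i j; simp [Matrix.mul_apply, Matrix.star_apply, hb]⟩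
  have := congrFun (congrFun hz 0) 0
  simp [Matrix.mul_apply, Matrix.star_apply] at this
  rw [this]
  exact star_mul_self_nonneg _

lemma aux_eta_star {B : Type*} [CStarAlgebra B] [PartialOrder B] [StarOrderedRing B]
    (η : A →L[ℂ] B) (h : ∀ a : A, 0 ≤ a → 0 ≤ η a) (a : A) : η (star a) = star (η a) := by
  let f : A →ₚ[ℂ] B := PositiveLinearMap.mk₀ η.toLinearMap h
  exact map_star f a

end helpers

/-- Theorem 4.2, "FullHorodiscs": under the subordination setup, if along a
sequence `yₙ ↓ 0` the values `ω(α + i yₙ v)` converge in norm to a selfadjoint `ω₀` and the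
normalized imaginary parts converge in norm to a strictly positive `ℓ`, then for every
state `φ` on `B` and every strictly positive `u`, there is `ε₀ > 0` with
`φ(Im η((X − ω₀ − i t u)⁻¹)) ≤ t/ε₀` for all `t > 0`; in particular the liminf as `t → 0⁺`
of `φ(Im η((X − ω₀ − i t u)⁻¹))/t` is finite. -/
theorem julia_caratheodory_horodiscs
    {A B : Type*} [CStarAlgebra A] [PartialOrder A] [StarOrderedRing A]
    [CStarAlgebra B] [PartialOrder B] [StarOrderedRing B]
    (ι : B →⋆ₐ[ℂ] A) (hι : Function.Injective ι)
    (X : A) (hX : IsSelfAdjoint X)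
    (a₀ : B) (ha₀ : IsSelfAdjoint a₀)
    (η : A →L[ℂ] B)
    (hηcp : ∀ n : ℕ, ∀ p : Matrix (Fin n) (Fin n) A,
      (∃ y : Matrix (Fin n) (Fin n) A, p = star y * y) →
      ∃ z : Matrix (Fin n) (Fin n) B, p.map ⇑η = star z * z)
    (ω : B → B)
    (hω : ∀ b : B, SPos (imP b) →
      SPos (imP (ω b)) ∧ ω b = b + a₀ + η (Ring.inverse (X - ι (ω b))))
    (α : B) (hα : IsSelfAdjoint α) (v : B) (hv : SPos v)
    (y : ℕ → ℝ) (hy : ∀ n, 0 < y n) (hy0 : Tendsto y atTop (𝓝 0))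
    (ω₀ : B) (hω₀ : IsSelfAdjoint ω₀)
    (hconv : Tendsto (fun n => ω (α + ((y n : ℂ) * Complex.I) • v)) atTop (𝓝 ω₀))
    (ℓ : B) (hℓ : SPos ℓ)
    (hlconv : Tendsto
      (fun n => ‖imP (ω (α + ((y n : ℂ) * Complex.I) • v))‖⁻¹ •
        imP (ω (α + ((y n : ℂ) * Complex.I) • v))) atTop (𝓝 ℓ)) :
    ∀ φ : B →L[ℂ] ℂ, (∀ a : B, 0 ≤ a → 0 ≤ φ a) → φ 1 = 1 →
    ∀ u : B, SPos u →
    ∃ ε₀ : ℝ, 0 < ε₀ ∧ ∀ t : ℝ, 0 < t →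
      φ (imP (η (Ring.inverse (X - ι ω₀ - ((t : ℂ) * Complex.I) • ι u)))) ≤
        ((t / ε₀ : ℝ) : ℂ) := by
  intro φ hφ hφ1 u hu
  haveI : Nontrivial B := by
    refine ⟨1, 0, fun h => ?_⟩
    rw [h, map_zero] at hφ1
    exact zero_ne_one hφ1
  have hη := aux_eta_nonneg η hηcp
  have hηs := aux_eta_star η hη
  have hηim : ∀ a : A, η (imP a) = imP (η a) := by
    intro a; simp only [imP, map_smul, map_sub, hηs]
  have hGmono : ∀ a b : B, a ≤ b → (φ a).re ≤ (φ b).re := by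
    intro a b hab
    have := hφ (b - a) (sub_nonneg.mpr hab)
    rw [map_sub, sub_nonneg] at this
    exact (Complex.le_def.mp this).1
  have hGsmul : ∀ (r : ℝ) (a : B), (φ (r • a)).re = r * (φ a).re := by
    intro r a
    rw [← Complex.coe_smul, map_smul]; simp
  have hFmono : ∀ a b : A, a ≤ b → (φ (η a)).re ≤ (φ (η b)).re := by
    intro a b hab
    apply hGmono
    have := hη (b - a) (sub_nonneg.mpr hab)
    rwa [map_sub, sub_nonneg] at this
  have hFsmul : ∀ (r : ℝ) (a : A), (φ (η (r • a))).re = r * (φ (η a)).re := by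
    intro r a
    rw [← hGsmul, ← Complex.coe_smul, map_smul, Complex.coe_smul]
  set W : ℕ → B := fun n => ω (α + ((y n : ℂ) * Complex.I) • v) with hW
  have hinp : ∀ n, imP (α + ((y n : ℂ) * Complex.I) • v) = y n • v :=
    fun n => aux_imP_add_smul α v hα hv.1 (y n)
  have hWn : ∀ n, SPos (imP (W n)) ∧
      W n = α + ((y n : ℂ) * Complex.I) • v + a₀ + η (Ring.inverse (X - ι (W n))) := by
    intro n
    exact hω _ (by rw [hinp]; exact aux_spos_smul v hv _ (hy n))
  have hιW : ∀ n, SPos (imP (ι (W n))) := by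
    intro n; rw [aux_imP_map]; exact aux_spos_map ι _ (hWn n).1
  have hUn : ∀ n, IsUnit (X - ι (W n)) := fun n => aux_isUnit_sub X _ hX (hιW n)
  set Q : ℕ → A := fun n => Ring.inverse (X - ι (W n)) with hQ
  have hQ1 : ∀ n, Q n * (X - ι (W n)) = 1 := fun n => Ring.inverse_mul_cancel _ (hUn n)
  have hQ2 : ∀ n, (X - ι (W n)) * Q n = 1 := fun n => Ring.mul_inverse_cancel _ (hUn n)
  have hQim : ∀ n, imP (Q n) = Q n * ι (imP (W n)) * star (Q n) := by
    intro n
    rw [aux_imP_inv X _ _ hX (hQ1 n) (hQ2 n), aux_imP_map]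
  -- `η (Im Qₙ) ≤ Im Wₙ`
  have hle : ∀ n, η (imP (Q n)) ≤ imP (W n) := by
    intro n
    have h1 : imP (W n) = y n • v + η (imP (Q n)) := by
      rw [hηim, ← hinp n]
      nth_rewrite 1 [(hWn n).2]
      simp only [imP, star_add, ha₀.star_eq]
      module
    rw [h1]
    exact le_add_of_nonneg_left (smul_nonneg (hy n).le hv.2.1)
  obtain ⟨c, hc, hcl⟩ := aux_lower ℓ hℓ
  have hbound : ∀ᶠ n in atTop, (φ (η (Q n * star (Q n)))).re ≤ 2 / c := by
    have hnear : ∀ᶠ n in atTop, ‖ℓ - ‖imP (W n)‖⁻¹ • imP (W n)‖ < c / 2 := by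
      have := (tendsto_const_nhds (x := ℓ)).sub hlconv
      rw [sub_self] at this
      have := this.norm
      rw [norm_zero] at this
      exact this.eventually (gt_mem_nhds (half_pos hc))
    filter_upwards [hnear] with n hn
    set p := imP (W n) with hp
    have hp0 : 0 < ‖p‖ := norm_pos_iff.mpr (hWn n).1.2.2.ne_zero
    have hpsa : IsSelfAdjoint p := (hWn n).1.1
    have hnsa : IsSelfAdjoint (‖p‖⁻¹ • p) :=
      (smul_nonneg (inv_nonneg.mpr hp0.le) (hWn n).1.2.1).isSelfAdjoint
    have h1 : ℓ - ‖p‖⁻¹ • p ≤ algebraMap ℝ B (c / 2) :=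
      ((hℓ.1.sub hnsa).le_algebraMap_norm_self).trans (algebraMap_mono B hn.le)
    have h2 : algebraMap ℝ B (c / 2) ≤ ‖p‖⁻¹ • p := by
      have h3 : algebraMap ℝ B c = algebraMap ℝ B (c / 2) + algebraMap ℝ B (c / 2) := by
        rw [← map_add, add_halves]
      rw [h3] at hcl
      have h4 := hcl.trans (sub_le_iff_le_add.mp h1)
      exact le_of_add_le_add_left h4
    have h3 : (‖p‖ * (c / 2)) • (1 : B) ≤ p := by
      have := smul_le_smul_of_nonneg_left h2 hp0.le
      rwa [smul_smul, mul_inv_cancel₀ hp0.ne', one_smul, Algebra.algebraMap_eq_smul_one,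
        smul_smul] at this
    have h4 : (‖p‖ * (c / 2)) • (1 : A) ≤ ι p := by
      have h5 : ι ((‖p‖ * (c / 2)) • (1 : B)) = (‖p‖ * (c / 2)) • (1 : A) := by
        rw [← Complex.coe_smul, map_smul, map_one, Complex.coe_smul]
      rw [← h5]
      exact OrderHomClass.mono ι h3
    have h5 := star_right_conjugate_le_conjugate h4 (Q n)
    rw [← hQim, mul_smul_comm, smul_mul_assoc, mul_one] at h5
    have h6 := hFmono _ _ h5
    rw [hFsmul] at h6
    have h7 := hGmono _ _ (hle n)
    have h8 := hGmono _ _ (hpsa.le_algebraMap_norm_self)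
    rw [Algebra.algebraMap_eq_smul_one, hGsmul, hφ1, Complex.one_re, mul_one] at h8
    have h9 : ‖p‖ * (c / 2 * (φ (η (Q n * star (Q n)))).re) ≤ ‖p‖ * 1 := by
      rw [← mul_assoc, mul_one]; exact h6.trans (h7.trans h8)
    have h10 := le_of_mul_le_mul_left h9 hp0
    rw [le_div_iff₀ hc]
    linarith
  refine ⟨(‖ι u‖ * (2 / c) + 1)⁻¹, by positivity, ?_⟩
  intro t ht
  set q : A := t • ι u with hq
  have hqpos : SPos q := aux_spos_smul _ (aux_spos_map ι u hu) t ht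
  set a : A := ι ω₀ + ((t : ℂ) * Complex.I) • ι u with ha
  have hιω₀ : IsSelfAdjoint (ι ω₀) := hω₀.map ι
  have haim : imP a = q := aux_imP_add_smul _ _ hιω₀ (hu.1.map ι) t
  have haU : IsUnit (X - a) := aux_isUnit_sub X a hX (by rw [haim]; exact hqpos)
  have hXa : X - ι ω₀ - ((t : ℂ) * Complex.I) • ι u = X - a := by rw [ha, sub_sub]
  rw [hXa]
  set R := Ring.inverse (X - a) with hR
  have hR1 : R * (X - a) = 1 := Ring.inverse_mul_cancel _ haU
  have hR2 : (X - a) * R = 1 := Ring.mul_inverse_cancel _ haU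
  obtain ⟨qu, hqu⟩ := hqpos.2.2
  set qi : A := ((qu⁻¹ : Aˣ) : A) with hqi
  have hqqi : q * qi = 1 := by rw [← hqu]; exact qu.mul_inv
  have hqiq : qi * q = 1 := by rw [← hqu]; exact qu.inv_mul
  have hqis : star qi = qi := by
    have h1 : star qi * q = 1 := by
      calc star qi * q = star qi * star q := by rw [hqpos.1.star_eq]
        _ = 1 := by rw [← star_mul, hqqi, star_one]
    exact left_inv_eq_right_inv h1 hqqi
  set D : ℕ → A := fun n => star (a - star (ι (W n))) * qi * (a - star (ι (W n))) with hD
  have hkey : ∀ n, imP R ≤ Q n * D n * star (Q n) := fun n =>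
    aux_key_s6 X a (ι (W n)) R (Q n) q qi hX hR1 hR2 (hQ1 n) (hQ2 n) (hιW n).2.1 haim
      hqpos.2.1 hqis hqqi hqiq
  have hDsa : ∀ n, IsSelfAdjoint (D n) := by
    intro n
    simp only [hD, IsSelfAdjoint, star_mul, star_star, hqis, mul_assoc]
  have hDlim : Tendsto (fun n => ‖D n‖) atTop (𝓝 (t * ‖ι u‖)) := by
    have hιc : Continuous ι := map_continuous ι
    have h1 : Tendsto (fun n => ι (W n)) atTop (𝓝 (ι ω₀)) := (hιc.tendsto ω₀).comp hconv
    have h2 : Tendsto (fun n => a - star (ι (W n))) atTop (𝓝 (a - star (ι ω₀))) :=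
      tendsto_const_nhds.sub h1.star
    have h3 := ((h2.star.mul_const qi).mul h2).norm
    have h4 : a - star (ι ω₀) = Complex.I • q := by
      rw [hιω₀.star_eq, ha, hq, add_sub_cancel_left, mul_comm, mul_smul, Complex.coe_smul]
    have h5 : star (a - star (ι ω₀)) * qi * (a - star (ι ω₀)) = q := by
      rw [h4, star_smul, hqpos.1.star_eq, smul_mul_assoc, hqqi, smul_mul_smul_comm, one_mul]
      simp
    rw [h5] at h3
    have h6 : ‖q‖ = t * ‖ι u‖ := by rw [hq, norm_smul, Real.norm_of_nonneg ht.le]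
    rw [h6] at h3
    exact h3
  have hev : ∀ᶠ n in atTop, (φ (η (imP R))).re ≤ ‖D n‖ * (2 / c) := by
    filter_upwards [hbound] with n hn
    have h1 : D n ≤ ‖D n‖ • (1 : A) := by
      rw [← Algebra.algebraMap_eq_smul_one]; exact (hDsa n).le_algebraMap_norm_self
    have h2 := star_right_conjugate_le_conjugate h1 (Q n)
    rw [mul_smul_comm, smul_mul_assoc, mul_one] at h2
    have h3 := hFmono _ _ ((hkey n).trans h2)
    rw [hFsmul] at h3
    exact h3.trans (mul_le_mul_of_nonneg_left hn (norm_nonneg _))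
  have hfin : (φ (η (imP R))).re ≤ t * ‖ι u‖ * (2 / c) :=
    ge_of_tendsto (hDlim.mul_const (2 / c)) hev
  have hRpos : 0 ≤ imP R := by
    rw [aux_imP_inv X a R hX hR1 hR2, haim]
    exact star_right_conjugate_nonneg hqpos.2.1 R
  have him := (Complex.le_def.mp (hφ _ (hη _ hRpos))).2
  rw [← hηim, Complex.le_def]
  refine ⟨?_, ?_⟩
  · rw [Complex.ofReal_re, div_inv_eq_mul]
    nlinarith
  · rw [Complex.ofReal_im, ← him, Complex.zero_im]
end
end
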